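/- arXiv:2508.11577 — 2 statements merged into one kernel-verified Lean document; each statement's English description precedes it below -/
import Mathlib

section
/- Distance sets of winning sets: Let n ∈ ℕ, let A be a diagonal (n×n)-matrix with diagonal entries β₁₁,…,β_nn ∈ (0,1/5), set β_max = max_j β_jj, and let α, c ∈ (0,1) and ρ₂ > 0. Assume there exists δ ∈ (0,1) such that 2·α^c ≤ δ²(1 − (∏_{j=1}^n β_jj)^{1−c}) and 3^{−n}∏_{j=1}^n (1 − 5β_jj^{⌊δ(2^{1/c}α)^{−1}⌋}) > 8^n(1 + 2^{2n+1})δ (that is, M(α,A,c,ρ₂) ≥ 2). Then for all η₁,…,η_n ∈ [0,1], all λ ∈ (0,(1 − β_max)ρ₂), all y ∈ ℝ^n and all S ∈ 𝒮(α,A,c,ρ₂), the set S ∩ B[y,ρ₂] contains two points x = (x⁽¹⁾,…,x⁽ⁿ⁾) and x' = (x'⁽¹⁾,…,x'⁽ⁿ⁾) satisfying |x⁽ʲ⁾ − x'⁽ʲ⁾| = η_j·λ for all j ∈ {1,…,n}. -/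
open scoped ENNReal

/-- The axis-parallel closed box `A^t(B[0,r]) + y`, where `A` is the diagonal matrix with
diagonal entries `β j`: the set of `x` with `|x j - y j| ≤ (β j)^t * r` for every `j`. -/
def gameBox {n : ℕ} (β : Fin n → ℝ) (t r : ℝ) (y : Fin n → ℝ) : Set (Fin n → ℝ) :=
  {x | ∀ j, |x j - y j| ≤ β j ^ t * r}

/-- A legal move of Player II on turn `m + 1` (turns are indexed from `1` in the paper) of the
`(α, A, c, ρ₂, ρ₁)`-potential game: an at most countable collection of pairs `(q, y)` with
`q ≥ 1`, satisfying, when `c > 0`,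
`Σ (∏_j β_j^q)^c ≤ (α ∏_j β_j^(m+1))^c`, and, when `c = 0`, consisting of at most one pair
`(q, y)`, which must satisfy `∏_j β_j^q ≤ α ∏_j β_j^(m+1)`. The empty collection (a skip) is
always legal. -/
def LegalMove {n : ℕ} (β : Fin n → ℝ) (α c : ℝ) (m : ℕ)
    (M : Set (ℝ × (Fin n → ℝ))) : Prop :=
  M.Countable ∧ (∀ p ∈ M, 1 ≤ p.1) ∧
    (if 0 < c then
      ∑' p : M, ENNReal.ofReal ((∏ j, β j ^ p.1.1) ^ c)
        ≤ ENNReal.ofReal ((α * ∏ j, β j ^ (m + 1 : ℝ)) ^ c)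
    else
      M.Subsingleton ∧ ∀ p ∈ M, (∏ j, β j ^ p.1) ≤ α * ∏ j, β j ^ (m + 1 : ℝ))

/-- `S` is a winning set for Player II in the `(α, A, c, ρ₂, ρ₁)`-potential game, where `A` is
the diagonal matrix with diagonal entries `β j`.  Player I's play on turn `m + 1` is
`U_{m+1} = A^{m+1}(B[0,r]) + b m` with `ρ₂ ≤ r ≤ ρ₁` and `U_{m+2} ⊆ U_{m+1}`; a strategy for
Player II assigns to every finite history (the radius `r` together with the centres
`b 0, …, b m` of Player I's plays so far) a collection of pairs `(q, y)`, which must be a legal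
move whenever the history is legal.  The strategy is winning for `S` if for every legal infinite
play in which Player II follows it, every point `x` of `⋂ U_m` which avoids the deleted region
`⋃_m ⋃_{(q,y)} (A^q(B[0,r]) + y)` lies in `S`. -/
def IsWinning {n : ℕ} (β : Fin n → ℝ) (α c ρ₂ ρ₁ : ℝ) (S : Set (Fin n → ℝ)) : Prop :=
  ∃ σ : ℝ → (m : ℕ) → (Fin (m + 1) → (Fin n → ℝ)) → Set (ℝ × (Fin n → ℝ)),
    (∀ (r : ℝ) (m : ℕ) (b : Fin (m + 1) → (Fin n → ℝ)),
      ρ₂ ≤ r → r ≤ ρ₁ →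
      (∀ i : Fin m,
        gameBox β ((i : ℕ) + 2 : ℝ) r (b i.succ) ⊆ gameBox β ((i : ℕ) + 1 : ℝ) r (b i.castSucc)) →
      LegalMove β α c m (σ r m b)) ∧
    (∀ (r : ℝ) (b : ℕ → (Fin n → ℝ)),
      ρ₂ ≤ r → r ≤ ρ₁ →
      (∀ m : ℕ, gameBox β ((m : ℕ) + 2 : ℝ) r (b (m + 1)) ⊆ gameBox β ((m : ℕ) + 1 : ℝ) r (b m)) →
      ∀ x : Fin n → ℝ, (∀ m : ℕ, x ∈ gameBox β ((m : ℕ) + 1 : ℝ) r (b m)) →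
        x ∉ ⋃ (m : ℕ), ⋃ p ∈ σ r m (fun i : Fin (m + 1) => b (i : ℕ)), gameBox β p.1 r p.2 →
        x ∈ S)

/-- The family `𝒮(α, A, c, ρ₂)` of sets that are `(α, A, c, ρ₂, ρ₁)`-winning for some
`ρ₁ ≥ ρ₂`. -/
def winFamily {n : ℕ} (β : Fin n → ℝ) (α c ρ₂ : ℝ) : Set (Set (Fin n → ℝ)) :=
  {S | ∃ ρ₁ : ℝ, ρ₂ ≤ ρ₁ ∧ IsWinning β α c ρ₂ ρ₁ S}



noncomputable section

namespace WSD

variable {n : ℕ}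

/-- The box of `p` may meet the box of level `t` around `cc`. -/
def Hit (β : Fin n → ℝ) (r : ℝ) (t : ℝ) (cc : Fin n → ℝ) (p : ℝ × (Fin n → ℝ)) : Prop :=
  ∀ j, |p.2 j - cc j| ≤ (β j ^ p.1 + β j ^ t) * r

/-- Weight. -/
def wt (B c : ℝ) (p : ℝ × (Fin n → ℝ)) : ℝ≥0∞ := ENNReal.ofReal (B ^ (p.1 * c))

/-- Truncated relative weight. -/
def fw (B c K L : ℝ) (p : ℝ × (Fin n → ℝ)) : ℝ≥0∞ :=
  ENNReal.ofReal (min 1 (B ^ (p.1 * c) / (K * B ^ (L * c))))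

/-- Total truncated weight of the members of `M` hitting the box. -/
def Cost (β : Fin n → ℝ) (r B c K L : ℝ) (M : Set (ℝ × (Fin n → ℝ))) (cc : Fin n → ℝ) : ℝ≥0∞ :=
  ∑' p : {p | p ∈ M ∧ Hit β r L cc p}, fw B c K L p.1

/-- Centre of grid box. -/
def ctr (β : Fin n → ℝ) (r : ℝ) (b : Fin n → ℝ) (L : ℝ) (k : Fin n → ℤ) : Fin n → ℝ :=
  fun j => b j + k j * (β j ^ L * r)

lemma card_int (x R : ℝ) (hR : 0 ≤ R) :
    ((Finset.Icc ⌈x - R⌉ ⌊x + R⌋).card : ℝ) ≤ 2 * R + 1 := by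
  rw [Int.card_Icc]
  have h1 := Int.le_ceil (x - R)
  have h2 := Int.floor_le (x + R)
  rcases le_total 0 (⌊x + R⌋ + 1 - ⌈x - R⌉) with h | h
  · have : (((⌊x + R⌋ + 1 - ⌈x - R⌉).toNat : ℤ) : ℝ) = ((⌊x + R⌋ + 1 - ⌈x - R⌉ : ℤ) : ℝ) := by
      rw [Int.toNat_of_nonneg h]
    rw [Int.cast_natCast] at this
    rw [this]; push_cast; linarith
  · rw [Int.toNat_of_nonpos h]; simp; linarith

lemma card_pi (s : Finset (Fin n → ℤ)) (x R : Fin n → ℝ) (hR : ∀ j, 0 ≤ R j)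
    (h : ∀ k ∈ s, ∀ j, |(k j : ℝ) - x j| ≤ R j) : (s.card : ℝ) ≤ ∏ j, (2 * R j + 1) := by
  have hsub : s ⊆ Fintype.piFinset (fun j => Finset.Icc ⌈x j - R j⌉ ⌊x j + R j⌋) := by
    intro k hk
    rw [Fintype.mem_piFinset]
    intro j
    have := abs_le.1 (h k hk j)
    rw [Finset.mem_Icc]
    exact ⟨Int.ceil_le.2 (by linarith), Int.le_floor.2 (by linarith)⟩
  have h1 := Finset.card_le_card hsub
  rw [Fintype.card_piFinset] at h1
  calc (s.card : ℝ) ≤ ((∏ j, (Finset.Icc ⌈x j - R j⌉ ⌊x j + R j⌋).card : ℕ) : ℝ) := by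
        exact_mod_cast h1
    _ = ∏ j, ((Finset.Icc ⌈x j - R j⌉ ⌊x j + R j⌋).card : ℝ) := by push_cast; rfl
    _ ≤ _ := Finset.prod_le_prod (fun _ _ => by positivity) (fun j _ => card_int _ _ (hR j))

lemma prod_rpow (β : Fin n → ℝ) (hβ : ∀ j, β j ∈ Set.Ioo (0 : ℝ) (1 / 5)) (t : ℝ) :
    ∏ j, β j ^ t = (∏ j, β j) ^ t :=
  Real.finsetProd_rpow _ _ (fun j _ => (hβ j).1.le) _

lemma hit_count (β : Fin n → ℝ) (hβ : ∀ j, β j ∈ Set.Ioo (0 : ℝ) (1 / 5)) (r : ℝ) (hr : 0 < r)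
    (b : Fin n → ℝ) (L : ℝ) (p : ℝ × (Fin n → ℝ)) (s : Finset (Fin n → ℤ))
    (h : ∀ k ∈ s, Hit β r L (ctr β r b L k) p) :
    (s.card : ℝ) ≤ 5 ^ n * max 1 ((∏ j, β j) ^ (p.1 - L)) := by
  have h1 := card_pi s (fun j => (p.2 j - b j) / (β j ^ L * r)) (fun j => β j ^ (p.1 - L) + 1)
    (fun j => by have := Real.rpow_pos_of_pos (hβ j).1 (p.1 - L); linarith) (by
      intro k hk j
      have h2 := h k hk j
      have hp : 0 < β j ^ L := Real.rpow_pos_of_pos (hβ j).1 L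
      have hpr : 0 < β j ^ L * r := by positivity
      rw [Real.rpow_sub (hβ j).1]
      have e1 : (k j : ℝ) - (p.2 j - b j) / (β j ^ L * r)
          = -(p.2 j - ctr β r b L k j) / (β j ^ L * r) := by
        unfold ctr; field_simp; ring
      have e2 : β j ^ p.1 / β j ^ L + 1 = (β j ^ p.1 + β j ^ L) * r / (β j ^ L * r) := by
        field_simp
      rw [e1, e2, abs_div, abs_neg, abs_of_pos hpr]
      gcongr)
  refine h1.trans ?_
  have h5 : (5 : ℝ) ^ n = ∏ _j : Fin n, (5 : ℝ) := by simp
  rcases le_total L p.1 with hL | hL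
  · calc _ ≤ ∏ _j : Fin n, (5 : ℝ) := by
          refine Finset.prod_le_prod (fun j _ => ?_) (fun j _ => ?_)
          · have := Real.rpow_pos_of_pos (hβ j).1 (p.1 - L); positivity
          · have := Real.rpow_le_one (hβ j).1.le (by linarith [(hβ j).2]) (sub_nonneg.2 hL)
            linarith
      _ = 5 ^ n * 1 := by simp
      _ ≤ _ := by gcongr; exact le_max_left _ _
  · calc _ ≤ ∏ j : Fin n, (5 * β j ^ (p.1 - L)) := by
          refine Finset.prod_le_prod (fun j _ => ?_) (fun j _ => ?_)
          · have := Real.rpow_pos_of_pos (hβ j).1 (p.1 - L); positivity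
          · have := Real.one_le_rpow_of_pos_of_le_one_of_nonpos (hβ j).1
              (by linarith [(hβ j).2]) (sub_nonpos.2 hL)
            linarith
      _ = 5 ^ n * (∏ j, β j) ^ (p.1 - L) := by
          rw [Finset.prod_mul_distrib, prod_rpow β hβ]; simp
      _ ≤ _ := by gcongr; exact le_max_right _ _

lemma term_real (B c K L A e q : ℝ) (hB : 0 < B) (hB1 : B < 1) (hc : c ∈ Set.Ioo (0 : ℝ) 1)
    (hK : 0 < K) (hA : 0 < A) (hq : B ^ (q * c) ≤ (A * B ^ e) ^ c) :
    max 1 (B ^ (q - L)) * min 1 (B ^ (q * c) / (K * B ^ (L * c))) ≤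
      ((A * B ^ e) ^ (1 - c) * B ^ (-L) + B ^ (-(L * c)) / K) * B ^ (q * c) := by
  have hBe : 0 < A * B ^ e := by positivity
  have hBq : B ^ q ≤ A * B ^ e := by
    rw [Real.rpow_mul hB.le] at hq
    exact (Real.rpow_le_rpow_iff (by positivity) hBe.le hc.1).1 hq
  have h1 : B ^ (q - L) ≤ (A * B ^ e) ^ (1 - c) * B ^ (-L) * B ^ (q * c) := by
    have : B ^ (q - L) = (B ^ q) ^ (1 - c) * B ^ (-L) * B ^ (q * c) := by
      rw [← Real.rpow_mul hB.le, ← Real.rpow_add hB, ← Real.rpow_add hB]; ring_nf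
    rw [this]
    have := Real.rpow_le_rpow (by positivity) hBq (sub_nonneg.2 hc.2.le)
    gcongr
  have h2 : B ^ (q * c) / (K * B ^ (L * c)) = B ^ (-(L * c)) / K * B ^ (q * c) := by
    rw [Real.rpow_neg hB.le]; field_simp
  rw [add_mul, ← h2]
  have h3 : 0 < B ^ (q * c) / (K * B ^ (L * c)) := by positivity
  have h4 : 0 < B ^ (q - L) := by positivity
  rcases le_total L q with hL | hL
  · have := Real.rpow_le_one hB.le hB1.le (sub_nonneg.2 hL)
    rw [max_eq_left this, one_mul]
    have := min_le_right 1 (B ^ (q * c) / (K * B ^ (L * c)))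
    linarith
  · have := Real.one_le_rpow_of_pos_of_le_one_of_nonpos hB hB1.le (sub_nonpos.2 hL)
    rw [max_eq_right this]
    have := min_le_left 1 (B ^ (q * c) / (K * B ^ (L * c)))
    nlinarith

lemma set_cost (β : Fin n → ℝ) (hβ : ∀ j, β j ∈ Set.Ioo (0 : ℝ) (1 / 5)) (r : ℝ) (hr : 0 < r)
    (b : Fin n → ℝ) (B c K L A e : ℝ) (hBd : B = ∏ j, β j) (hB : 0 < B) (hB1 : B < 1)
    (hc : c ∈ Set.Ioo (0 : ℝ) 1)
    (hK : 0 < K) (hA : 0 < A) (s : Finset (Fin n → ℤ)) (M : Set (ℝ × (Fin n → ℝ)))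
    (hM : ∑' p : M, wt B c p.1 ≤ ENNReal.ofReal ((A * B ^ e) ^ c)) :
    ∑ k ∈ s, Cost β r B c K L M (ctr β r b L k) ≤
      ENNReal.ofReal (5 ^ n * (A * B ^ (e - L) + A ^ c * B ^ ((e - L) * c) / K)) := by
  classical
  have hwt : ∀ p ∈ M, B ^ (p.1 * c) ≤ (A * B ^ e) ^ c := by
    intro p hp
    have : wt B c p ≤ ENNReal.ofReal ((A * B ^ e) ^ c) :=
      (ENNReal.le_tsum (f := fun p : M => wt B c p.1) ⟨p, hp⟩).trans hM
    exact (ENNReal.ofReal_le_ofReal_iff (by positivity)).1 this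
  set G := (A * B ^ e) ^ (1 - c) * B ^ (-L) + B ^ (-(L * c)) / K with hG
  have hG0 : 0 ≤ G := by positivity
  have e1 : ∀ k, Cost β r B c K L M (ctr β r b L k) =
      ∑' p, ({p | p ∈ M ∧ Hit β r L (ctr β r b L k) p} : Set _).indicator (fw B c K L) p := by
    intro k; unfold Cost; rw [tsum_subtype]
  simp_rw [e1]
  rw [← Summable.tsum_finsetSum (fun _ _ => ENNReal.summable)]
  have key : ∀ p, ∑ k ∈ s, ({p | p ∈ M ∧ Hit β r L (ctr β r b L k) p} : Set _).indicator
      (fw B c K L) p ≤ ENNReal.ofReal (5 ^ n * G) * M.indicator (wt B c) p := by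
    intro p
    by_cases hp : p ∈ M
    · have e2 : ∀ k, ({p | p ∈ M ∧ Hit β r L (ctr β r b L k) p} : Set _).indicator
          (fw B c K L) p = if Hit β r L (ctr β r b L k) p then fw B c K L p else 0 := by
        intro k; simp [Set.indicator_apply, hp]
      simp_rw [e2]
      rw [← Finset.sum_filter, Finset.sum_const, Set.indicator_of_mem hp, nsmul_eq_mul]
      have hc1 := hit_count β hβ r hr b L p (s.filter fun k => Hit β r L (ctr β r b L k) p)
        (fun k hk => (Finset.mem_filter.1 hk).2)
      unfold fw wt
      rw [← ENNReal.ofReal_natCast, ← ENNReal.ofReal_mul (by positivity),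
        ← ENNReal.ofReal_mul (by positivity)]
      apply ENNReal.ofReal_le_ofReal
      have ht := term_real B c K L A e p.1 hB hB1 hc hK hA (hwt p hp)
      rw [← hBd] at hc1
      have h0 : 0 ≤ min 1 (B ^ (p.1 * c) / (K * B ^ (L * c))) := by positivity
      calc _ ≤ 5 ^ n * max 1 (B ^ (p.1 - L)) * min 1 (B ^ (p.1 * c) / (K * B ^ (L * c))) := by
            gcongr
        _ = 5 ^ n * (max 1 (B ^ (p.1 - L)) * min 1 (B ^ (p.1 * c) / (K * B ^ (L * c)))) := by ring
        _ ≤ 5 ^ n * (G * B ^ (p.1 * c)) := by gcongr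
        _ = _ := by ring
    · have : ∀ k, ({p | p ∈ M ∧ Hit β r L (ctr β r b L k) p} : Set _).indicator
          (fw B c K L) p = 0 := by
        intro k; simp [Set.indicator_apply, hp]
      simp [this]
  refine (ENNReal.tsum_le_tsum key).trans ?_
  rw [ENNReal.tsum_mul_left, ← tsum_subtype]
  refine (mul_le_mul_right hM _).trans ?_
  rw [← ENNReal.ofReal_mul (by positivity)]
  apply ENNReal.ofReal_le_ofReal
  apply le_of_eq
  rw [mul_assoc, hG, add_mul]
  congr 2
  · rw [mul_right_comm, ← Real.rpow_add (by positivity)]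
    rw [Real.rpow_sub hB, Real.rpow_neg hB.le]
    simp; field_simp
  · rw [Real.mul_rpow hA.le (by positivity), ← Real.rpow_mul hB.le]
    rw [show (e - L) * c = e * c + -(L * c) by ring, Real.rpow_add hB]
    ring

/-- Legal step of Player I. -/
def Step (β : Fin n → ℝ) (r : ℝ) (b : ℕ → Fin n → ℝ) (i : ℕ) : Prop :=
  ∀ j, |b (i + 1) j - b i j| + β j ^ ((i : ℝ) + 2) * r ≤ β j ^ ((i : ℝ) + 1) * r

/-- Deleted boxes so far that may meet the current box. -/
def Dels (β : Fin n → ℝ) (r : ℝ) (τ : ℕ → (ℕ → Fin n → ℝ) → Set (ℝ × (Fin n → ℝ)))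
    (b : ℕ → Fin n → ℝ) (m : ℕ) : Set (ℝ × (Fin n → ℝ)) :=
  {p | (∃ m' < m, p ∈ τ m' b) ∧ Hit β r ((m : ℝ) + 1) (b m) p}

/-- Rounding to the coarser grid. -/
def rd (β : Fin n → ℝ) (k : Fin n → ℤ) : Fin n → ℤ := fun j => round (β j * k j)

/-- Path to the grid point `k` at level `m0 + i`. -/
def path (β : Fin n → ℝ) (r : ℝ) (b : ℕ → Fin n → ℝ) (m0 i : ℕ) (k : Fin n → ℤ) :
    ℕ → Fin n → ℝ := fun m =>
  if m ≤ m0 then b m else ctr β r (b m0) ((m : ℝ) + 1) ((rd β)^[i - (m - m0)] k)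

lemma path_agree (β : Fin n → ℝ) (r : ℝ) (b : ℕ → Fin n → ℝ) (m0 N i : ℕ) (hi : i ≤ N)
    (k : Fin n → ℤ) (m : ℕ) (hm : m ≤ m0 + i) :
    path β r b m0 N k m = path β r b m0 i ((rd β)^[N - i] k) m := by
  unfold path
  split_ifs with h
  · rfl
  · rw [← Function.iterate_add_apply]
    congr 3; omega

lemma rd_bound (β : Fin n → ℝ) (hβ : ∀ j, β j ∈ Set.Ioo (0 : ℝ) (1 / 5)) (N : ℕ)
    (k : Fin n → ℤ) (hk : ∀ j, |(k j : ℝ)| ≤ (β j ^ N)⁻¹ / 3) (d : ℕ) (hd : d ≤ N) (j : Fin n) :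
    |(((rd β)^[d] k) j : ℝ)| ≤ (β j ^ (N - d))⁻¹ / 3 + 5 / 8 := by
  induction d with
  | zero => simpa using (hk j).trans (by norm_num)
  | succ d ih =>
    have ih := ih (by omega)
    rw [Function.iterate_succ_apply']
    set k' := (rd β)^[d] k
    have h0 := (hβ j).1
    have h5 := (hβ j).2
    have h1 := abs_sub_round (β j * k' j)
    have h2 : |((round (β j * k' j) : ℤ) : ℝ)| ≤ |β j * k' j| + 1 / 2 := by
      have := abs_sub_abs_le_abs_sub ((round (β j * k' j) : ℤ) : ℝ) (β j * k' j)
      rw [abs_sub_comm] at this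
      linarith
    have h3 : |β j * k' j| ≤ β j * ((β j ^ (N - d))⁻¹ / 3 + 5 / 8) := by
      rw [abs_mul, abs_of_pos h0]; gcongr
    have h4 : β j * (β j ^ (N - d))⁻¹ = (β j ^ (N - (d + 1)))⁻¹ := by
      rw [show N - d = (N - (d + 1)) + 1 by omega, pow_succ]
      field_simp
    show |((round (β j * k' j) : ℤ) : ℝ)| ≤ _
    rw [← h4]
    nlinarith

lemma rd_zero (β : Fin n → ℝ) (hβ : ∀ j, β j ∈ Set.Ioo (0 : ℝ) (1 / 5)) (N : ℕ)
    (k : Fin n → ℤ) (hk : ∀ j, |(k j : ℝ)| ≤ (β j ^ N)⁻¹ / 3) : (rd β)^[N] k = 0 := by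
  funext j
  have h := rd_bound β hβ N k hk N le_rfl j
  simp only [Nat.sub_self, pow_zero] at h
  have h1 : |(((rd β)^[N] k) j : ℝ)| < 1 := by linarith
  have h2 : |((rd β)^[N] k) j| < 1 := by exact_mod_cast h1
  simpa using Int.abs_lt_one_iff.1 h2

lemma path_ctr (β : Fin n → ℝ) (hβ : ∀ j, β j ∈ Set.Ioo (0 : ℝ) (1 / 5)) (r : ℝ)
    (b : ℕ → Fin n → ℝ) (m0 N : ℕ)
    (k : Fin n → ℤ) (hk : ∀ j, |(k j : ℝ)| ≤ (β j ^ N)⁻¹ / 3) (i : ℕ) :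
    path β r b m0 N k (m0 + i) = ctr β r (b m0) ((m0 : ℝ) + i + 1) ((rd β)^[N - i] k) := by
  unfold path
  split_ifs with h
  · have : i = 0 := by omega
    subst this
    rw [Nat.sub_zero, rd_zero β hβ N k hk]
    funext j; simp [ctr]
  · rw [show m0 + i - m0 = i by omega]; push_cast; rfl

lemma path_step (β : Fin n → ℝ) (hβ : ∀ j, β j ∈ Set.Ioo (0 : ℝ) (1 / 5)) (r : ℝ) (hr : 0 < r)
    (b : ℕ → Fin n → ℝ) (m0 N : ℕ)
    (k : Fin n → ℤ) (hk : ∀ j, |(k j : ℝ)| ≤ (β j ^ N)⁻¹ / 3) (i : ℕ) (hi : i < N) :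
    Step β r (path β r b m0 N k) (m0 + i) := by
  intro j
  rw [add_assoc, path_ctr β hβ r b m0 N k hk, path_ctr β hβ r b m0 N k hk]
  rw [show N - i = (N - (i + 1)) + 1 by omega, Function.iterate_succ_apply']
  set k' := (rd β)^[N - (i + 1)] k
  have h0 := (hβ j).1
  have h5 := (hβ j).2
  have h1 := abs_sub_round (β j * k' j)
  unfold ctr rd
  have e1 : β j ^ ((m0 : ℝ) + (i + 1 : ℕ) + 1) = β j ^ ((m0 : ℝ) + i + 1) * β j := by
    rw [← Real.rpow_add_one h0.ne']; push_cast; ring_nf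
  have e2 : β j ^ (((m0 + i : ℕ) : ℝ) + 2) = β j ^ ((m0 : ℝ) + i + 1) * β j := by
    rw [← Real.rpow_add_one h0.ne']; push_cast; ring_nf
  rw [e1, e2]
  push_cast
  set s := β j ^ ((m0 : ℝ) + i + 1)
  have hs : 0 < s := Real.rpow_pos_of_pos h0 _
  have e3 : b m0 j + (k' j : ℝ) * (s * β j * r) - (b m0 j + (round (β j * k' j) : ℤ) * (s * r))
      = (β j * k' j - (round (β j * k' j) : ℤ)) * (s * r) := by ring
  rw [e3, abs_mul, abs_of_pos (show 0 < s * r by positivity)]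
  have : 0 < s * r := by positivity
  nlinarith

lemma step_hit (β : Fin n → ℝ) (r : ℝ) (b : ℕ → Fin n → ℝ) (m0 N : ℕ)
    (h : ∀ i < N, Step β r b (m0 + i)) (p : ℝ × (Fin n → ℝ))
    (hp : Hit β r (((m0 + N : ℕ) : ℝ) + 1) (b (m0 + N)) p) :
    Hit β r ((m0 : ℝ) + 1) (b m0) p := by
  induction N with
  | zero => simpa using hp
  | succ N ih =>
    apply ih (fun i hi => h i (by omega))
    intro j
    have h1 := h N (by omega) j
    have h2 := hp j
    have h3 := abs_sub_le (p.2 j) (b (m0 + (N + 1)) j) (b (m0 + N) j)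
    rw [show ((m0 + (N + 1) : ℕ) : ℝ) + 1 = ((m0 + N : ℕ) : ℝ) + 2 by push_cast; ring] at h2
    rw [add_assoc m0 N 1] at h1
    linarith

/-- The finite set of leaves. -/
def leaves (β : Fin n → ℝ) (N : ℕ) : Finset (Fin n → ℤ) :=
  Fintype.piFinset fun j => Finset.Icc (-⌊(β j ^ N)⁻¹ / 3⌋) ⌊(β j ^ N)⁻¹ / 3⌋

/-- The finite set of nodes. -/
def nodes (β : Fin n → ℝ) (i : ℕ) : Finset (Fin n → ℤ) :=
  Fintype.piFinset fun j => Finset.Icc (-⌊(β j ^ i)⁻¹ / 3 + 5 / 8⌋) ⌊(β j ^ i)⁻¹ / 3 + 5 / 8⌋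

lemma mem_box (x : ℝ) (k : ℤ) : k ∈ Finset.Icc (-⌊x⌋) ⌊x⌋ ↔ |(k : ℝ)| ≤ x := by
  rw [Finset.mem_Icc, abs_le, Int.le_floor, neg_le, Int.le_floor]
  push_cast
  constructor <;> rintro ⟨h, h'⟩ <;> constructor <;> linarith

lemma mem_leaves (β : Fin n → ℝ) (N : ℕ) (k : Fin n → ℤ) :
    k ∈ leaves β N ↔ ∀ j, |(k j : ℝ)| ≤ (β j ^ N)⁻¹ / 3 := by
  simp only [leaves, Fintype.mem_piFinset, mem_box]

lemma mem_nodes (β : Fin n → ℝ) (N : ℕ) (k : Fin n → ℤ) :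
    k ∈ nodes β N ↔ ∀ j, |(k j : ℝ)| ≤ (β j ^ N)⁻¹ / 3 + 5 / 8 := by
  simp only [nodes, Fintype.mem_piFinset, mem_box]

lemma card_nodes (β : Fin n → ℝ) (hβ : ∀ j, β j ∈ Set.Ioo (0 : ℝ) (1 / 5)) (i : ℕ) :
    ((nodes β i).card : ℝ) ≤ 3 ^ n * ((∏ j, β j) ^ i)⁻¹ := by
  have h1 : ∀ j, 1 ≤ (β j ^ i)⁻¹ := fun j => by
    have h0 := (hβ j).1
    exact (one_le_inv₀ (by positivity)).2 (pow_le_one₀ h0.le (by linarith [(hβ j).2]))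
  have := card_pi (nodes β i) (fun _ => 0) (fun j => (β j ^ i)⁻¹ / 3 + 5 / 8)
    (fun j => by linarith [h1 j]) (fun k hk j => by simpa using (mem_nodes β i k).1 hk j)
  refine this.trans ?_
  have e : 3 ^ n * ((∏ j, β j) ^ i)⁻¹ = ∏ j, (3 * (β j ^ i)⁻¹) := by
    rw [Finset.prod_mul_distrib, Finset.prod_inv_distrib, Finset.prod_pow]; simp
  rw [e]
  exact Finset.prod_le_prod (fun j _ => by linarith [h1 j]) (fun j _ => by linarith [h1 j])

lemma card_leaves (β : Fin n → ℝ) (hβ : ∀ j, β j ∈ Set.Ioo (0 : ℝ) (1 / 5)) (N : ℕ) (hN : 1 ≤ N) :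
    (7 / 15) ^ n * ((∏ j, β j) ^ N)⁻¹ ≤ ((leaves β N).card : ℝ) := by
  have h1 : ∀ j, 5 ≤ (β j ^ N)⁻¹ := fun j => by
    have h0 := (hβ j).1
    have : β j ^ N ≤ β j ^ 1 := pow_le_pow_of_le_one h0.le (by linarith [(hβ j).2]) hN
    rw [le_inv_comm₀ (by norm_num) (by positivity)]
    have := (hβ j).2
    norm_num at *; linarith
  have e : (7 / 15) ^ n * ((∏ j, β j) ^ N)⁻¹ = ∏ j, (7 / 15 * (β j ^ N)⁻¹) := by
    rw [Finset.prod_mul_distrib, Finset.prod_inv_distrib, Finset.prod_pow,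
      Finset.prod_const, Finset.card_univ, Fintype.card_fin]
  rw [e, leaves, Fintype.card_piFinset]
  push_cast
  refine Finset.prod_le_prod (fun j _ => by linarith [h1 j]) (fun j _ => ?_)
  rw [Int.card_Icc]
  set x := (β j ^ N)⁻¹
  have h2 := Int.lt_floor_add_one (x / 3)
  have h3 : 0 ≤ ⌊x / 3⌋ := Int.floor_nonneg.2 (by linarith [h1 j])
  have h4 : (((⌊x / 3⌋ + 1 - -⌊x / 3⌋).toNat : ℤ) : ℝ) = ((⌊x / 3⌋ + 1 - -⌊x / 3⌋ : ℤ) : ℝ) := by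
    rw [Int.toNat_of_nonneg (by omega)]
  rw [Int.cast_natCast] at h4
  rw [h4]; push_cast
  linarith [h1 j]

lemma cost_bound (β : Fin n → ℝ) (r B c K L : ℝ) (hB : 0 < B) (hK : 0 < K)
    (M M0 : Set (ℝ × (Fin n → ℝ))) (N : ℕ) (M1 : ℕ → Set (ℝ × (Fin n → ℝ)))
    (cc : Fin n → ℝ)
    (hM : ∀ p ∈ M, Hit β r L cc p ∧ (p ∈ M0 ∨ ∃ i < N, p ∈ M1 i))
    (h : Cost β r B c K L M0 cc + ∑ i ∈ Finset.range N, Cost β r B c K L (M1 i) cc < 1) :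
    ∑' p : M, wt B c p.1 ≤ ENNReal.ofReal (K * B ^ (L * c)) := by
  have hsub : M ⊆ {p | p ∈ M0 ∧ Hit β r L cc p} ∪
      ⋃ i ∈ Finset.range N, {p | p ∈ M1 i ∧ Hit β r L cc p} := by
    intro p hp
    obtain ⟨h1, h2 | ⟨i, hi, h2⟩⟩ := hM p hp
    · exact Or.inl ⟨h2, h1⟩
    · right
      simp only [Set.mem_iUnion]
      exact ⟨i, Finset.mem_range.2 hi, h2, h1⟩
  have h1 : ∑' p : M, fw B c K L p.1 < 1 := by
    refine lt_of_le_of_lt ?_ h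
    refine (ENNReal.tsum_mono_subtype (fw B c K L) hsub).trans ?_
    refine (ENNReal.tsum_union_le (fw B c K L) _ _).trans ?_
    unfold Cost
    gcongr
    exact ENNReal.tsum_biUnion_le (fw B c K L) _ _
  have hKB : 0 < K * B ^ (L * c) := by positivity
  have h2 : ∀ p ∈ M, wt B c p = ENNReal.ofReal (K * B ^ (L * c)) * fw B c K L p := by
    intro p hp
    have h3 : fw B c K L p < 1 :=
      lt_of_le_of_lt (ENNReal.le_tsum (f := fun p : M => fw B c K L p.1) ⟨p, hp⟩) h1
    unfold fw at h3 ⊢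
    rw [← ENNReal.ofReal_one, ENNReal.ofReal_lt_ofReal_iff one_pos] at h3
    have h4 : min 1 (B ^ (p.1 * c) / (K * B ^ (L * c))) = B ^ (p.1 * c) / (K * B ^ (L * c)) := by
      rcases min_choice 1 (B ^ (p.1 * c) / (K * B ^ (L * c))) with h | h
      · rw [h] at h3; exact absurd h3 (lt_irrefl _)
      · exact h
    rw [h4, ← ENNReal.ofReal_mul hKB.le, mul_div_cancel₀ _ hKB.ne']
    rfl
  calc ∑' p : M, wt B c p.1 = ∑' p : M, ENNReal.ofReal (K * B ^ (L * c)) * fw B c K L p.1 :=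
        tsum_congr (fun p => h2 p.1 p.2)
    _ = ENNReal.ofReal (K * B ^ (L * c)) * ∑' p : M, fw B c K L p.1 := ENNReal.tsum_mul_left
    _ ≤ ENNReal.ofReal (K * B ^ (L * c)) * 1 := by gcongr
    _ = _ := mul_one _

lemma macro_step (β : Fin n → ℝ) (hβ : ∀ j, β j ∈ Set.Ioo (0 : ℝ) (1 / 5)) (r : ℝ) (hr : 0 < r)
    (B c K A : ℝ) (hBd : B = ∏ j, β j) (hB : 0 < B) (hB1 : B < 1)
    (hc : c ∈ Set.Ioo (0 : ℝ) 1) (hK : 0 < K) (hK1 : K < 1) (hA : 0 < A)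
    (τ : ℕ → (ℕ → Fin n → ℝ) → Set (ℝ × (Fin n → ℝ)))
    (hloc : ∀ m b b', (∀ i ≤ m, b i = b' i) → τ m b = τ m b')
    (hτ : ∀ m b, ∑' p : τ m b, wt B c p.1 ≤ ENNReal.ofReal ((A * B ^ ((m : ℝ) + 1)) ^ c))
    (N : ℕ) (hN : 1 ≤ N)
    (hnum : 5 ^ n * (K * B ^ (-(N : ℝ)) + B ^ (-(N : ℝ) * c)) +
      ∑ i ∈ Finset.range N, 3 ^ n * (B ^ i)⁻¹ *
        (5 ^ n * (A * B ^ ((i : ℝ) - N) + A ^ c * B ^ (((i : ℝ) - N) * c) / K))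
        < (7 / 15) ^ n * (B ^ N)⁻¹)
    (m0 : ℕ) (b : ℕ → Fin n → ℝ) (hb : ∀ i < m0, Step β r b i)
    (hpot : ∑' p : Dels β r τ b m0, wt B c p.1 ≤ ENNReal.ofReal (K * B ^ (((m0 : ℝ) + 1) * c))) :
    ∃ b' : ℕ → Fin n → ℝ, (∀ i ≤ m0, b' i = b i) ∧ (∀ i < m0 + N, Step β r b' i) ∧
      ∑' p : Dels β r τ b' (m0 + N), wt B c p.1 ≤
        ENNReal.ofReal (K * B ^ ((((m0 + N : ℕ) : ℝ) + 1) * c)) := by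
  classical
  set L : ℝ := ((m0 + N : ℕ) : ℝ) + 1 with hL
  set cc : (Fin n → ℤ) → Fin n → ℝ := ctr β r (b m0) L with hcc
  set T : ℕ → (Fin n → ℤ) → Set (ℝ × (Fin n → ℝ)) :=
    fun i κ => τ (m0 + i) (path β r b m0 i κ) with hT
  set O := Dels β r τ b m0 with hO
  have hold : ∑ k ∈ leaves β N, Cost β r B c K L O (cc k) ≤
      ENNReal.ofReal (5 ^ n * (K * B ^ (-(N : ℝ)) + B ^ (-(N : ℝ) * c))) := by
    have hK' : 0 < K ^ (1 / c) := by positivity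
    have e0 : (K ^ (1 / c)) ^ c = K := by
      rw [← Real.rpow_mul hK.le, one_div_mul_cancel hc.1.ne', Real.rpow_one]
    have := set_cost β hβ r hr (b m0) B c K L (K ^ (1 / c)) ((m0 : ℝ) + 1) hBd hB hB1 hc hK hK'
      (leaves β N) O (by
        rw [Real.mul_rpow hK'.le (by positivity), e0, ← Real.rpow_mul hB.le]
        exact hpot)
    refine this.trans (ENNReal.ofReal_le_ofReal ?_)
    have e1 : (m0 : ℝ) + 1 - L = -(N : ℝ) := by rw [hL]; push_cast; ring
    rw [e0, e1, mul_div_cancel_left₀ _ hK.ne']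
    have h3 : K ^ (1 / c) ≤ K := by
      have := Real.rpow_le_rpow_of_exponent_ge hK hK1.le
        (show (1 : ℝ) ≤ 1 / c from (one_le_div hc.1).2 hc.2.le)
      rwa [Real.rpow_one] at this
    gcongr
  have hnew : ∀ i ∈ Finset.range N,
      ∑ k ∈ leaves β N, Cost β r B c K L (T i ((rd β)^[N - i] k)) (cc k) ≤
      ENNReal.ofReal (3 ^ n * (B ^ i)⁻¹ *
        (5 ^ n * (A * B ^ ((i : ℝ) - N) + A ^ c * B ^ (((i : ℝ) - N) * c) / K))) := by
    intro i hi
    have hi := Finset.mem_range.1 hi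
    calc ∑ k ∈ leaves β N, Cost β r B c K L (T i ((rd β)^[N - i] k)) (cc k)
        ≤ ∑ k ∈ leaves β N, ∑ κ ∈ nodes β i, Cost β r B c K L (T i κ) (cc k) := by
          refine Finset.sum_le_sum (fun k hk => ?_)
          refine Finset.single_le_sum (f := fun κ => Cost β r B c K L (T i κ) (cc k))
            (fun _ _ => zero_le) ?_
          rw [mem_nodes]
          intro j
          have := rd_bound β hβ N k ((mem_leaves β N k).1 hk) (N - i) (by omega) j
          rwa [show N - (N - i) = i by omega] at this
      _ = ∑ κ ∈ nodes β i, ∑ k ∈ leaves β N, Cost β r B c K L (T i κ) (cc k) :=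
          Finset.sum_comm
      _ ≤ ∑ κ ∈ nodes β i, ENNReal.ofReal
            (5 ^ n * (A * B ^ ((i : ℝ) - N) + A ^ c * B ^ (((i : ℝ) - N) * c) / K)) := by
          refine Finset.sum_le_sum (fun κ _ => ?_)
          have := set_cost β hβ r hr (b m0) B c K L A (((m0 + i : ℕ) : ℝ) + 1) hBd hB hB1 hc hK hA
            (leaves β N) (T i κ) (hτ _ _)
          rwa [show ((m0 + i : ℕ) : ℝ) + 1 - L = (i : ℝ) - N by rw [hL]; push_cast; ring] at this
      _ ≤ _ := by
          rw [Finset.sum_const, nsmul_eq_mul, ← ENNReal.ofReal_natCast,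
            ← ENNReal.ofReal_mul (by positivity)]
          apply ENNReal.ofReal_le_ofReal
          have := card_nodes β hβ i
          rw [← hBd] at this
          gcongr
  have hex : ∃ k ∈ leaves β N, Cost β r B c K L O (cc k) +
      ∑ i ∈ Finset.range N, Cost β r B c K L (T i ((rd β)^[N - i] k)) (cc k) < 1 := by
    by_contra! hcon
    have h1 := Finset.sum_le_sum hcon
    rw [Finset.sum_const, nsmul_eq_mul, mul_one, Finset.sum_add_distrib, Finset.sum_comm] at h1
    have h2 := h1.trans (add_le_add hold (Finset.sum_le_sum hnew))
    rw [← ENNReal.ofReal_sum_of_nonneg (fun i _ => by positivity),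
      ← ENNReal.ofReal_add (by positivity) (Finset.sum_nonneg fun i _ => by positivity),
      ← ENNReal.ofReal_natCast] at h2
    have h3 := card_leaves β hβ N hN
    rw [← hBd] at h3
    have h4 := (ENNReal.ofReal_le_ofReal_iff
      (add_nonneg (by positivity) (Finset.sum_nonneg fun i _ => by positivity))).1 h2
    linarith
  obtain ⟨k, hk, hk1⟩ := hex
  have hk' := (mem_leaves β N k).1 hk
  have hagree : ∀ i ≤ m0, path β r b m0 N k i = b i := fun i hi => by simp [path, hi]
  have hstep : ∀ i < N, Step β r (path β r b m0 N k) (m0 + i) :=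
    fun i hi => path_step β hβ r hr b m0 N k hk' i hi
  have hcN : path β r b m0 N k (m0 + N) = cc k := by
    rw [path_ctr β hβ r b m0 N k hk', Nat.sub_self, hcc, hL]; push_cast; rfl
  refine ⟨path β r b m0 N k, hagree, ?_, ?_⟩
  · intro i hi
    rcases lt_or_ge i m0 with h | h
    · have := hb i h
      unfold Step at this ⊢
      rwa [hagree i h.le, hagree (i + 1) h]
    · obtain ⟨i', rfl⟩ := Nat.exists_eq_add_of_le h
      exact hstep i' (by omega)
  · refine cost_bound β r B c K L hB hK _ O N (fun i => T i ((rd β)^[N - i] k)) (cc k) ?_ hk1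
    rintro p ⟨⟨m', hm', hp⟩, hhit⟩
    have hhit0 := step_hit β r _ m0 N hstep p hhit
    rw [hcN] at hhit
    refine ⟨hhit, ?_⟩
    rcases lt_or_ge m' m0 with h | h
    · left
      refine ⟨⟨m', h, ?_⟩, ?_⟩
      · rwa [hloc m' b (path β r b m0 N k) (fun i hi => (hagree i (by omega)).symm)]
      · rwa [hagree m0 le_rfl] at hhit0
    · right
      obtain ⟨i, rfl⟩ := Nat.exists_eq_add_of_le h
      refine ⟨i, by omega, ?_⟩
      show p ∈ τ (m0 + i) _
      rwa [← hloc (m0 + i) _ _ (fun m hm => path_agree β r b m0 N i (by omega) k m hm)]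

lemma dels_congr (β : Fin n → ℝ) (r : ℝ)
    (τ : ℕ → (ℕ → Fin n → ℝ) → Set (ℝ × (Fin n → ℝ)))
    (hloc : ∀ m b b', (∀ i ≤ m, b i = b' i) → τ m b = τ m b') (b b' : ℕ → Fin n → ℝ) (m : ℕ)
    (h : ∀ i ≤ m, b i = b' i) : Dels β r τ b m = Dels β r τ b' m := by
  unfold Dels
  rw [h m le_rfl]
  ext p
  simp only [Set.mem_ofPred_eq]
  refine and_congr_left fun _ => exists_congr fun m' => and_congr_right fun hm' => ?_
  rw [hloc m' b b' (fun i hi => h i (by omega))]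

lemma infinite_play (β : Fin n → ℝ) (hβ : ∀ j, β j ∈ Set.Ioo (0 : ℝ) (1 / 5)) (r : ℝ) (hr : 0 < r)
    (B c K A : ℝ) (hBd : B = ∏ j, β j) (hB : 0 < B) (hB1 : B < 1)
    (hc : c ∈ Set.Ioo (0 : ℝ) 1) (hK : 0 < K) (hK1 : K < 1) (hA : 0 < A)
    (τ : ℕ → (ℕ → Fin n → ℝ) → Set (ℝ × (Fin n → ℝ)))
    (hloc : ∀ m b b', (∀ i ≤ m, b i = b' i) → τ m b = τ m b')
    (hτ : ∀ m b, ∑' p : τ m b, wt B c p.1 ≤ ENNReal.ofReal ((A * B ^ ((m : ℝ) + 1)) ^ c))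
    (N : ℕ) (hN : 1 ≤ N)
    (hnum : 5 ^ n * (K * B ^ (-(N : ℝ)) + B ^ (-(N : ℝ) * c)) +
      ∑ i ∈ Finset.range N, 3 ^ n * (B ^ i)⁻¹ *
        (5 ^ n * (A * B ^ ((i : ℝ) - N) + A ^ c * B ^ (((i : ℝ) - N) * c) / K))
        < (7 / 15) ^ n * (B ^ N)⁻¹)
    (b0 : Fin n → ℝ) :
    ∃ b : ℕ → Fin n → ℝ, b 0 = b0 ∧ (∀ i, Step β r b i) ∧
      ∀ k : ℕ, ∑' p : Dels β r τ b (k * N), wt B c p.1 ≤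
        ENNReal.ofReal (K * B ^ ((((k * N : ℕ) : ℝ) + 1) * c)) := by
  set P : ℕ → (ℕ → Fin n → ℝ) → Prop := fun k b => (∀ i < k * N, Step β r b i) ∧
    ∑' p : Dels β r τ b (k * N), wt B c p.1 ≤
        ENNReal.ofReal (K * B ^ ((((k * N : ℕ) : ℝ) + 1) * c)) with hP
  have hnext : ∀ k (b : {b // P k b}), ∃ b' : {b // P (k + 1) b},
      ∀ i ≤ k * N, b'.1 i = b.1 i := by
    rintro k ⟨b, hb, hb'⟩
    obtain ⟨b', h1, h2, h3⟩ := macro_step β hβ r hr B c K A hBd hB hB1 hc hK hK1 hA τ hloc hτ N hN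
      hnum (k * N) b hb hb'
    refine ⟨⟨b', ?_⟩, h1⟩
    simp only [hP]
    rw [add_mul, one_mul]
    exact ⟨h2, h3⟩
  choose f hf using hnext
  have hinit : P 0 (fun _ => b0) := by
    simp only [hP]
    refine ⟨fun i hi => absurd hi (by simp), ?_⟩
    have : Dels β r τ (fun _ => b0) (0 * N) = ∅ := by
      unfold Dels; simp
    rw [this]; simp
  let s : (k : ℕ) → {b // P k b} := fun k => Nat.rec ⟨_, hinit⟩ (fun k b => f k b) k
  have hs : ∀ k, s (k + 1) = f k (s k) := fun k => rfl
  have hag : ∀ k d i, i ≤ k * N → (s (k + d)).1 i = (s k).1 i := by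
    intro k d
    induction d with
    | zero => intro i _; rfl
    | succ d ih =>
      intro i hi
      rw [← add_assoc, hs, hf _ _ i (hi.trans (Nat.mul_le_mul_right _ (by omega)))]
      exact ih i hi
  have hlim : ∀ k i, i ≤ k * N → (s i).1 i = (s k).1 i := by
    intro k i hi
    rcases le_total i k with h | h
    · obtain ⟨d, rfl⟩ := Nat.exists_eq_add_of_le h
      exact (hag i d i (Nat.le_mul_of_pos_right _ hN)).symm
    · obtain ⟨d, rfl⟩ := Nat.exists_eq_add_of_le h
      exact hag k d _ hi
  refine ⟨fun i => (s i).1 i, rfl, ?_, ?_⟩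
  · intro i
    have h1 := (s (i + 1)).2.1 i (lt_of_lt_of_le (Nat.lt_succ_self i)
      (Nat.le_mul_of_pos_right _ hN))
    have h2 : i + 1 ≤ (i + 1) * N := Nat.le_mul_of_pos_right _ hN
    have h3 := hlim (i + 1) i (by omega)
    unfold Step at h1 ⊢
    simp only []
    rw [h3]
    exact h1
  · intro k
    rw [dels_congr β r τ hloc _ (s k).1 (k * N) (fun i hi => hlim k i hi)]
    exact (s k).2.2

lemma avoid (β : Fin n → ℝ) (r B c K : ℝ) (hB : 0 < B) (hB1 : B < 1)
    (hc : c ∈ Set.Ioo (0 : ℝ) 1) (hK : 0 < K) (hK1 : K < 1)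
    (τ : ℕ → (ℕ → Fin n → ℝ) → Set (ℝ × (Fin n → ℝ)))
    (N : ℕ) (hN : 1 ≤ N) (b : ℕ → Fin n → ℝ)
    (hb : ∀ k : ℕ, ∑' p : Dels β r τ b (k * N), wt B c p.1 ≤
        ENNReal.ofReal (K * B ^ ((((k * N : ℕ) : ℝ) + 1) * c)))
    (x : Fin n → ℝ) (hx : ∀ m : ℕ, x ∈ gameBox β ((m : ℝ) + 1) r (b m))
    (m : ℕ) (p : ℝ × (Fin n → ℝ)) (hp : p ∈ τ m b) : x ∉ gameBox β p.1 r p.2 := by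
  intro hxp
  have hBc : B ^ c < 1 := Real.rpow_lt_one hB.le hB1 hc.1
  obtain ⟨k0, hk0⟩ := exists_pow_lt_of_lt_one (show 0 < B ^ (p.1 * c) by positivity) hBc
  set k := max k0 (m + 1)
  have hkN : m + 1 ≤ k * N := (le_max_right k0 (m + 1)).trans (Nat.le_mul_of_pos_right _ hN)
  have hkN' : k0 ≤ k * N := (le_max_left k0 (m + 1)).trans (Nat.le_mul_of_pos_right _ hN)
  have hmem : p ∈ Dels β r τ b (k * N) := by
    refine ⟨⟨m, by omega, hp⟩, ?_⟩
    intro j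
    have h1 := hx (k * N) j
    have h2 := hxp j
    have h3 := abs_sub_le (p.2 j) (x j) (b (k * N) j)
    rw [abs_sub_comm (p.2 j) (x j)] at h3
    rw [add_mul]; linarith
  have h1 : wt B c p ≤ _ :=
    (ENNReal.le_tsum (f := fun p : Dels β r τ b (k * N) => wt B c p.1) ⟨p, hmem⟩).trans (hb k)
  unfold wt at h1
  have h2 := (ENNReal.ofReal_le_ofReal_iff (by positivity)).1 h1
  have h3 : B ^ ((((k * N : ℕ) : ℝ) + 1) * c) ≤ (B ^ c) ^ k0 := by
    rw [← Real.rpow_natCast, ← Real.rpow_mul hB.le]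
    apply Real.rpow_le_rpow_of_exponent_ge hB hB1.le
    have : (k0 : ℝ) ≤ ((k * N : ℕ) : ℝ) := by exact_mod_cast hkN'
    have := hc.1
    nlinarith
  have h4 : 0 < B ^ ((((k * N : ℕ) : ℝ) + 1) * c) := by positivity
  nlinarith

lemma numeric (hn : 0 < n) (B c A δ : ℝ) (hB : 0 < B) (hB1 : B < 1)
    (hc : c ∈ Set.Ioo (0 : ℝ) 1) (hA : 0 < A) (hδ : δ ∈ Set.Ioo (0 : ℝ) 1)
    (h1 : A ^ c ≤ δ ^ 2 * (1 - B ^ (1 - c))) (hA1 : A ≤ A ^ c)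
    (hδn : 8 ^ n * (1 + 2 ^ (2 * n + 1)) * δ < (3 : ℝ)⁻¹ ^ n)
    (N : ℕ) (hN : (N : ℝ) ≤ δ / A) (hN' : δ / A < N + 1) :
    5 ^ n * (δ * B ^ (-(N : ℝ)) + B ^ (-(N : ℝ) * c)) +
      ∑ i ∈ Finset.range N, 3 ^ n * (B ^ i)⁻¹ *
        (5 ^ n * (A * B ^ ((i : ℝ) - N) + A ^ c * B ^ (((i : ℝ) - N) * c) / δ))
        < (7 / 15) ^ n * (B ^ N)⁻¹ := by
  obtain ⟨hδ0, hδ1⟩ := hδ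
  set x := B ^ (1 - c) with hx
  have hx0 : 0 < x := by positivity
  have hx1 : x < 1 := Real.rpow_lt_one hB.le hB1 (sub_pos.2 hc.2)
  set Q := (B ^ N)⁻¹ with hQ
  have hQ0 : 0 < Q := by positivity
  have hBN : B ^ (-(N : ℝ)) = Q := by rw [Real.rpow_neg hB.le, Real.rpow_natCast]
  -- the bound on delta
  have hpow1 : (1 : ℝ) ≤ 4 ^ n := one_le_pow₀ (by norm_num)
  have h96 : 2 * 96 ^ n * δ < 1 := by
    have e : (96 : ℝ) ^ n = 3 ^ n * (8 ^ n * 4 ^ n) := by rw [← mul_pow, ← mul_pow]; norm_num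
    have e2 : (2 : ℝ) ^ (2 * n + 1) = 2 * 4 ^ n := by
      rw [pow_succ, pow_mul]; norm_num; ring
    rw [e2, inv_pow, lt_inv_comm₀ (by positivity) (by positivity), ] at hδn
    have h3 : (3 : ℝ) ^ n * (8 ^ n * (1 + 2 * 4 ^ n) * δ) < 1 := by
      rw [lt_inv_comm₀ (by positivity) (by positivity)] at hδn
      calc _ < (3 : ℝ) ^ n * ((3 : ℝ) ^ n)⁻¹ := by gcongr
        _ = 1 := mul_inv_cancel₀ (by positivity)
    have h4 : 0 < (3 : ℝ) ^ n * 8 ^ n * δ := by positivity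
    rw [e]; nlinarith
  have hsmall : 3 * 15 ^ n * δ < (7 / 15 : ℝ) ^ n := by
    have h25 : (2 / 5 : ℝ) ^ n ≤ 2 / 5 := by
      have := pow_le_pow_of_le_one (show (0 : ℝ) ≤ 2 / 5 by norm_num) (by norm_num) hn
      simpa using this
    have e : (15 : ℝ) ^ n ≤ (7 / 15) ^ n * ((2 / 5) ^ n * 96 ^ n) := by
      rw [← mul_pow, ← mul_pow]
      exact pow_le_pow_left₀ (by norm_num) (by norm_num) n
    have h7 : (0 : ℝ) < (7 / 15) ^ n := by positivity
    have h96' : (0 : ℝ) < 96 ^ n := by positivity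
    calc 3 * 15 ^ n * δ ≤ 3 * ((7 / 15) ^ n * ((2 / 5) ^ n * 96 ^ n)) * δ := by gcongr
      _ ≤ 3 * ((7 / 15) ^ n * ((2 / 5) * 96 ^ n)) * δ := by gcongr
      _ = (7 / 15) ^ n * ((3 / 5) * (2 * 96 ^ n * δ)) := by ring
      _ < (7 / 15) ^ n * 1 := by gcongr; linarith
      _ = _ := mul_one _
  have hδ2 : δ < 1 / 2 := by
    have : (1 : ℝ) ≤ 96 ^ n := one_le_pow₀ (by norm_num)
    nlinarith
  -- x ^ N small
  have hAδ : A ≤ δ / 2 := by nlinarith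
  have hNx : 1 / (2 * δ) ≤ N * (1 - x) := by
    have h5 : A ≤ δ ^ 2 * (1 - x) := hA1.trans h1
    have h6 : δ / (2 * A) ≤ N := by
      have : 1 ≤ δ / (2 * A) := by rw [le_div_iff₀ (by positivity)]; linarith
      have e : δ / A = 2 * (δ / (2 * A)) := by field_simp
      linarith
    have h7 : A / δ ^ 2 ≤ 1 - x := by rw [div_le_iff₀ (by positivity)]; linarith
    calc 1 / (2 * δ) = δ / (2 * A) * (A / δ ^ 2) := by field_simp
      _ ≤ _ := by gcongr
  have hxN : x ^ N ≤ 2 * δ := by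
    have h8 := one_add_mul_le_pow (show (-2 : ℝ) ≤ x⁻¹ - 1 by
      have : 0 < x⁻¹ := by positivity
      linarith) N
    have h9 : 1 - x ≤ x⁻¹ - 1 := by
      have : x * x⁻¹ = 1 := mul_inv_cancel₀ hx0.ne'
      have h10 : 1 < x⁻¹ := (one_lt_inv₀ hx0).2 hx1
      nlinarith [sq_nonneg (x - 1)]
    have h11 : 1 / (2 * δ) ≤ (x ^ N)⁻¹ := by
      rw [← inv_pow]
      have : (N : ℝ) * (1 - x) ≤ N * (x⁻¹ - 1) := by gcongr
      have e : 1 + (x⁻¹ - 1) = x⁻¹ := by ring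
      rw [e] at h8
      linarith
    rw [one_div] at h11
    exact (inv_le_inv₀ (by positivity) (by positivity)).1 h11
  have hfirst : B ^ (-(N : ℝ) * c) = Q * x ^ N := by
    rw [← hBN, hx, ← Real.rpow_natCast, ← Real.rpow_mul hB.le, ← Real.rpow_add hB]
    ring_nf
  have hterm : ∀ i ∈ Finset.range N, 3 ^ n * (B ^ i)⁻¹ *
        (5 ^ n * (A * B ^ ((i : ℝ) - N) + A ^ c * B ^ (((i : ℝ) - N) * c) / δ)) =
        15 ^ n * Q * (A + A ^ c / δ * (x * x ^ (N - 1 - i))) := by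
    intro i hi
    have hi := Finset.mem_range.1 hi
    have e1 : (15 : ℝ) ^ n = 3 ^ n * 5 ^ n := by rw [← mul_pow]; norm_num
    have e2 : (B ^ i)⁻¹ * B ^ ((i : ℝ) - N) = Q := by
      rw [← hBN, ← Real.rpow_natCast, ← Real.rpow_neg hB.le, ← Real.rpow_add hB]
      ring_nf
    have e3 : (B ^ i)⁻¹ * B ^ (((i : ℝ) - N) * c) = Q * (x * x ^ (N - 1 - i)) := by
      rw [← pow_succ', ← hBN, hx, ← Real.rpow_natCast, ← Real.rpow_natCast,
        ← Real.rpow_neg hB.le, ← Real.rpow_add hB, ← Real.rpow_mul hB.le, ← Real.rpow_add hB,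
        show N - 1 - i + 1 = N - i by omega, Nat.cast_sub hi.le]
      ring_nf
    rw [e1]
    calc _ = 3 ^ n * 5 ^ n * (A * ((B ^ i)⁻¹ * B ^ ((i : ℝ) - N)) +
            A ^ c / δ * ((B ^ i)⁻¹ * B ^ (((i : ℝ) - N) * c))) := by ring
      _ = _ := by rw [e2, e3]; ring
  rw [Finset.sum_congr rfl hterm, ← Finset.mul_sum, Finset.sum_add_distrib, Finset.sum_const,
    ← Finset.mul_sum, ← Finset.mul_sum, Finset.sum_range_reflect (fun i => x ^ i) N,
    Finset.card_range, nsmul_eq_mul, hBN, hfirst]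
  set g := ∑ i ∈ Finset.range N, x ^ i with hg
  have hgs : g * (1 - x) = 1 - x ^ N := geom_sum_mul_neg x N
  have hg0 : 0 ≤ g := Finset.sum_nonneg fun i _ => by positivity
  have hg1 : A ^ c / δ * (x * g) ≤ δ := by
    have h12 : g * (1 - x) ≤ 1 := by rw [hgs]; have : 0 < x ^ N := by positivity
                                     linarith
    have h13 : x * g ≤ g := by nlinarith
    calc A ^ c / δ * (x * g) ≤ (δ ^ 2 * (1 - x)) / δ * g := by gcongr
      _ = δ * (g * (1 - x)) := by field_simp
      _ ≤ δ * 1 := by gcongr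
      _ = δ := mul_one _
  have hNA : N * A ≤ δ := (le_div_iff₀ hA).1 hN
  have h35 : (3 : ℝ) * 5 ^ n ≤ 15 ^ n := by
    rw [show (15 : ℝ) = 3 * 5 by norm_num, mul_pow]
    have : (3 : ℝ) ≤ 3 ^ n := by
      have := pow_le_pow_right₀ (show (1 : ℝ) ≤ 3 by norm_num) hn
      simpa using this
    gcongr
  calc _ ≤ 5 ^ n * (δ * Q + Q * (2 * δ)) + 15 ^ n * Q * (δ + δ) := by gcongr
    _ = Q * δ * (3 * 5 ^ n + 2 * 15 ^ n) := by ring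
    _ ≤ Q * δ * (15 ^ n + 2 * 15 ^ n) := by gcongr
    _ = (3 * 15 ^ n * δ) * Q := by ring
    _ < _ := by gcongr

lemma step_subset (β : Fin n → ℝ) (r : ℝ) (b : ℕ → Fin n → ℝ) (i : ℕ) (h : Step β r b i) :
    gameBox β ((i : ℝ) + 2) r (b (i + 1)) ⊆ gameBox β ((i : ℝ) + 1) r (b i) := by
  intro x hx j
  have h1 := hx j
  have h2 := h j
  have h3 := abs_sub_le (x j) (b (i + 1) j) (b i j)
  linarith

lemma step_shift (β : Fin n → ℝ) (r : ℝ) (b : ℕ → Fin n → ℝ) (v : Fin n → ℝ) (i : ℕ)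
    (h : Step β r b i) : Step β r (fun m => b m + v) i := by
  intro j
  have := h j
  simpa using this

lemma exists_limit (β : Fin n → ℝ) (r : ℝ) (hβ : ∀ j, β j ∈ Set.Ioo (0 : ℝ) (1 / 5)) (hr : 0 < r)
    (b : ℕ → Fin n → ℝ) (h : ∀ i, Step β r b i) :
    ∃ x, ∀ m : ℕ, x ∈ gameBox β ((m : ℝ) + 1) r (b m) := by
  have e : ∀ m : ℕ, gameBox β ((m : ℝ) + 1) r (b m) =
      Set.Icc (fun j => b m j - β j ^ ((m : ℝ) + 1) * r)
        (fun j => b m j + β j ^ ((m : ℝ) + 1) * r) := by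
    intro m
    ext x
    simp only [gameBox, Set.mem_ofPred_eq, Set.mem_Icc, Pi.le_def, abs_le]
    constructor
    · intro h
      exact ⟨fun j => by linarith [(h j).1], fun j => by linarith [(h j).2]⟩
    · rintro ⟨h1, h2⟩ j
      exact ⟨by linarith [h1 j], by linarith [h2 j]⟩
  have := IsCompact.nonempty_iInter_of_sequence_nonempty_isCompact_isClosed
    (fun m : ℕ => gameBox β ((m : ℝ) + 1) r (b m))
    (fun m => by
      have := step_subset β r b m (h m)
      have e2 : (m : ℝ) + 2 = ((m + 1 : ℕ) : ℝ) + 1 := by push_cast; ring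
      rwa [e2] at this)
    (fun m => ⟨b m, fun j => by
      have := (hβ j).1
      simp only [sub_self, abs_zero]; positivity⟩)
    (by rw [e]; exact isCompact_Icc)
    (fun m => by rw [e]; exact isClosed_Icc)
  obtain ⟨x, hx⟩ := this
  exact ⟨x, fun m => Set.mem_iInter.1 hx m⟩

/-- The joint strategy for `S` and its translate. -/
def joint (β : Fin n → ℝ) (r : ℝ) (v : Fin n → ℝ)
    (σ : (m : ℕ) → (Fin (m + 1) → (Fin n → ℝ)) → Set (ℝ × (Fin n → ℝ)))
    (m : ℕ) (b : ℕ → Fin n → ℝ) : Set (ℝ × (Fin n → ℝ)) :=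
  {p | (∀ i < m, Step β r b i) ∧ (p ∈ σ m (fun i => b i) ∨
    (p.1, p.2 + v) ∈ σ m (fun i => b i + v))}

lemma joint_loc (β : Fin n → ℝ) (r : ℝ) (v : Fin n → ℝ)
    (σ : (m : ℕ) → (Fin (m + 1) → (Fin n → ℝ)) → Set (ℝ × (Fin n → ℝ)))
    (m : ℕ) (b b' : ℕ → Fin n → ℝ) (h : ∀ i ≤ m, b i = b' i) :
    joint β r v σ m b = joint β r v σ m b' := by
  have h1 : (fun i : Fin (m + 1) => b i) = fun i : Fin (m + 1) => b' i :=
    funext fun i => h i (by omega)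
  have h2 : (fun i : Fin (m + 1) => b i + v) = fun i : Fin (m + 1) => b' i + v :=
    funext fun i => by rw [h i (by omega)]
  have h3 : (∀ i < m, Step β r b i) ↔ (∀ i < m, Step β r b' i) :=
    forall₂_congr fun i hi => by
      unfold Step; rw [h i (by omega), h (i + 1) (by omega)]
  unfold joint
  rw [h1, h2, h3]

lemma joint_legal (β : Fin n → ℝ) (r : ℝ) (v : Fin n → ℝ) (B c : ℝ) (X : ℝ≥0∞)
    (σ : (m : ℕ) → (Fin (m + 1) → (Fin n → ℝ)) → Set (ℝ × (Fin n → ℝ)))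
    (m : ℕ) (hσ : ∀ b : ℕ → Fin n → ℝ, (∀ i < m, Step β r b i) →
      ∑' p : σ m (fun i => b i), wt B c p.1 ≤ X) (b : ℕ → Fin n → ℝ) :
    ∑' p : joint β r v σ m b, wt B c p.1 ≤ 2 * X := by
  by_cases h : ∀ i < m, Step β r b i
  · set M2 := σ m (fun i => b i + v) with hM2
    have hsub : joint β r v σ m b ⊆ σ m (fun i => b i) ∪ {p | (p.1, p.2 + v) ∈ M2} := by
      rintro p ⟨_, h1 | h1⟩
      · exact Or.inl h1
      · exact Or.inr h1
    refine (ENNReal.tsum_mono_subtype (wt B c) hsub).trans ?_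
    refine (ENNReal.tsum_union_le (wt B c) _ _).trans ?_
    rw [two_mul]
    refine add_le_add (hσ b h) ?_
    refine le_trans ?_ (hσ (fun i => b i + v) (fun i hi => step_shift β r b v i (h i hi)))
    let g : {p : ℝ × (Fin n → ℝ) | (p.1, p.2 + v) ∈ M2} → M2 := fun p => ⟨(p.1.1, p.1.2 + v), p.2⟩
    have hg : Function.Injective g := by
      rintro ⟨⟨q, y⟩, hp⟩ ⟨⟨q', y'⟩, hp'⟩ he
      simp only [g, Subtype.mk.injEq, Prod.mk.injEq, add_left_inj] at he
      simp [he.1, he.2]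
    exact ENNReal.tsum_comp_le_tsum_of_injective hg (fun p : M2 => wt B c p.1)
  · have : joint β r v σ m b = ∅ := by
      ext p; simp only [joint, Set.mem_ofPred_eq, Set.mem_empty_iff_false, iff_false]
      exact fun hp => h hp.1
    rw [this]; simp

end WSD

end

/-- **Distance sets of winning sets.**  Let `A` be the diagonal `(n × n)`-matrix with diagonal
entries `β j ∈ (0, 1/5)`, `β_max = max_j β_j`, `α, c ∈ (0,1)` and `ρ₂ > 0`.  Assume there is a
`δ ∈ (0,1)` with `2 α^c ≤ δ²(1 − (∏_j β_j)^{1−c})` and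
`3^{−n} ∏_j (1 − 5 β_j^{⌊δ/(2^{1/c} α)⌋}) > 8^n (1 + 2^{2n+1}) δ` (i.e. `M(α,A,c,ρ₂) ≥ 2`).
Then for all `η⁽ʲ⁾ ∈ [0,1]`, all `λ ∈ (0, (1 − β_max) ρ₂)`, all `y ∈ ℝⁿ` and all
`S ∈ 𝒮(α, A, c, ρ₂)`, the set `S ∩ B[y, ρ₂]` contains two points `x, x'` with
`|x⁽ʲ⁾ − x'⁽ʲ⁾| = η⁽ʲ⁾ λ` for every `j`. -/
theorem winning_set_distances {n : ℕ} (hn : 0 < n)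
    (β : Fin n → ℝ) (hβ : ∀ j, β j ∈ Set.Ioo (0 : ℝ) (1 / 5))
    (βmax : ℝ) (hβmax : IsGreatest (Set.range β) βmax)
    (α c : ℝ) (hα : α ∈ Set.Ioo (0 : ℝ) 1) (hc : c ∈ Set.Ioo (0 : ℝ) 1)
    (ρ₂ : ℝ) (hρ₂ : 0 < ρ₂) (δ : ℝ) (hδ : δ ∈ Set.Ioo (0 : ℝ) 1)
    (h1 : 2 * α ^ c ≤ δ ^ 2 * (1 - (∏ j, β j) ^ (1 - c)))
    (h2 : (3 : ℝ)⁻¹ ^ n * ∏ j, (1 - 5 * β j ^ ⌊δ / ((2 : ℝ) ^ (1 / c) * α)⌋₊)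
            > 8 ^ n * (1 + 2 ^ (2 * n + 1)) * δ)
    (η : Fin n → ℝ) (hη : ∀ j, η j ∈ Set.Icc (0 : ℝ) 1)
    (lam : ℝ) (hlam : lam ∈ Set.Ioo 0 ((1 - βmax) * ρ₂))
    (y : Fin n → ℝ) (S : Set (Fin n → ℝ)) (hS : S ∈ winFamily β α c ρ₂) :
    ∃ x ∈ S ∩ Metric.closedBall y ρ₂, ∃ x' ∈ S ∩ Metric.closedBall y ρ₂,
      ∀ j, |x j - x' j| = η j * lam := by
  classical
  obtain ⟨ρ₁, hρ, σ, hσ, hwin⟩ := hS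
  obtain ⟨hα0, hα1⟩ := hα
  have hc' := hc
  obtain ⟨hc0, hc1⟩ := hc
  have hδ' := hδ
  obtain ⟨hδ0, hδ1⟩ := hδ
  obtain ⟨B, hBd⟩ : ∃ B, B = ∏ j, β j := ⟨_, rfl⟩
  have hB : 0 < B := by rw [hBd]; exact Finset.prod_pos fun j _ => (hβ j).1
  have hB1 : B < 1 := by
    have h3 : ∏ j, β j ≤ ∏ _j : Fin n, (1 / 5 : ℝ) :=
      Finset.prod_le_prod (fun j _ => (hβ j).1.le) (fun j _ => (hβ j).2.le)
    rw [Finset.prod_const, Finset.card_univ, Fintype.card_fin] at h3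
    have h4 : (1 / 5 : ℝ) ^ n < 1 := pow_lt_one₀ (by norm_num) (by norm_num) hn.ne'
    rw [hBd]; linarith
  rw [← hBd] at h1
  obtain ⟨A, hAd⟩ : ∃ A, A = (2 : ℝ) ^ (1 / c) * α := ⟨_, rfl⟩
  have hA : 0 < A := by rw [hAd]; positivity
  have hAc : A ^ c = 2 * α ^ c := by
    rw [hAd, Real.mul_rpow (by positivity) hα0.le, ← Real.rpow_mul (by norm_num),
      one_div_mul_cancel hc0.ne', Real.rpow_one]
  rw [← hAd] at h2
  have hx0 : 0 < B ^ (1 - c) := by positivity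
  have hAc1 : A ^ c ≤ δ ^ 2 * (1 - B ^ (1 - c)) := by rw [hAc]; exact h1
  have hAcd : A ^ c < δ ^ 2 := by nlinarith [pow_pos hδ0 2]
  have hAlt1 : A < 1 := by
    by_contra! hcon
    have := Real.one_le_rpow hcon hc0.le
    nlinarith
  have hAA : A ≤ A ^ c := by
    have := Real.rpow_le_rpow_of_exponent_ge hA hAlt1.le hc1.le
    rwa [Real.rpow_one] at this
  set N := ⌊δ / A⌋₊ with hNd
  have hN : 1 ≤ N := by
    rw [hNd, Nat.one_le_floor_iff, one_le_div hA]
    nlinarith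
  have hδn : 8 ^ n * (1 + 2 ^ (2 * n + 1)) * δ < (3 : ℝ)⁻¹ ^ n := by
    refine lt_of_lt_of_le h2 ?_
    have hle : ∏ j, (1 - 5 * β j ^ N) ≤ 1 := by
      refine Finset.prod_le_one (fun j _ => ?_) (fun j _ => ?_)
      · have h0 := (hβ j).1
        have h5 := (hβ j).2
        have := pow_le_pow_of_le_one h0.le (by linarith) hN
        rw [pow_one] at this
        linarith
      · have := pow_pos (hβ j).1 N
        linarith
    have h3 : (0 : ℝ) < (3 : ℝ)⁻¹ ^ n := by positivity
    nlinarith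
  have hnum := WSD.numeric hn B c A δ hB hB1 hc' hA hδ' hAc1 hAA hδn N
    (Nat.floor_le (by positivity)) (Nat.lt_floor_add_one _)
  set v : Fin n → ℝ := fun j => η j * lam with hv
  have hlegal : ∀ m (b : ℕ → Fin n → ℝ),
      ∑' p : WSD.joint β ρ₂ v (σ ρ₂) m b, WSD.wt B c p.1 ≤
        ENNReal.ofReal ((A * B ^ ((m : ℝ) + 1)) ^ c) := by
    intro m b
    have e : ENNReal.ofReal ((A * B ^ ((m : ℝ) + 1)) ^ c) =
        2 * ENNReal.ofReal ((α * B ^ ((m : ℝ) + 1)) ^ c) := by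
      rw [Real.mul_rpow hA.le (by positivity), hAc, Real.mul_rpow hα0.le (by positivity),
        mul_assoc, ENNReal.ofReal_mul (by norm_num)]
      simp
    rw [e]
    refine WSD.joint_legal β ρ₂ v B c _ (σ ρ₂) m ?_ b
    intro b hb
    have hl := (hσ ρ₂ m (fun i => b i) le_rfl hρ (by
      intro i
      have := WSD.step_subset β ρ₂ b i (hb i i.2)
      simpa using this)).2.2
    rw [if_pos hc0] at hl
    simp_rw [WSD.prod_rpow β hβ, ← hBd] at hl
    unfold WSD.wt
    simp_rw [Real.rpow_mul hB.le]
    exact hl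
  obtain ⟨b, hb0, hstep, hpot⟩ := WSD.infinite_play β hβ ρ₂ hρ₂ B c δ A hBd hB hB1 hc' hδ0 hδ1 hA
    (WSD.joint β ρ₂ v (σ ρ₂)) (WSD.joint_loc β ρ₂ v (σ ρ₂)) hlegal N hN hnum
    (fun j => y j - v j / 2)
  obtain ⟨x, hx⟩ := WSD.exists_limit β ρ₂ hβ hρ₂ b hstep
  have hav := WSD.avoid β ρ₂ B c δ hB hB1 hc' hδ0 hδ1 (WSD.joint β ρ₂ v (σ ρ₂)) N hN b hpot x hx
  have hxS : x ∈ S := by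
    refine hwin ρ₂ b le_rfl hρ (fun m => WSD.step_subset β ρ₂ b m (hstep m)) x hx ?_
    simp only [Set.mem_iUnion, not_exists]
    intro m p hp
    exact hav m p ⟨fun i _ => hstep i, Or.inl hp⟩
  have hxS' : x + v ∈ S := by
    refine hwin ρ₂ (fun m => b m + v) le_rfl hρ
      (fun m => WSD.step_subset β ρ₂ _ m (WSD.step_shift β ρ₂ b v m (hstep m))) (x + v) ?_ ?_
    · intro m j
      have := hx m j
      simpa using this
    · simp only [Set.mem_iUnion, not_exists]
      rintro m ⟨q, z⟩ hp hxz
      refine hav m (q, z - v) ⟨fun i _ => hstep i, Or.inr ?_⟩ ?_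
      · simpa using hp
      · intro j
        have := hxz j
        simp only [Pi.add_apply, Pi.sub_apply] at this ⊢
        rwa [show x j - (z j - v j) = x j + v j - z j by ring]
  have hbound : ∀ j, |x j - (y j - v j / 2)| ≤ β j * ρ₂ ∧ 0 ≤ v j ∧ v j ≤ (1 - β j) * ρ₂ := by
    intro j
    have h3 := hx 0 j
    rw [hb0] at h3
    have h4 : β j ≤ βmax := hβmax.2 ⟨j, rfl⟩
    refine ⟨by simpa using h3, mul_nonneg (hη j).1 hlam.1.le, ?_⟩
    have h5 : v j ≤ lam := by
      have := (hη j).2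
      have := hlam.1
      simp only [hv]; nlinarith
    have := hlam.2
    nlinarith
  refine ⟨x, ⟨hxS, ?_⟩, x + v, ⟨hxS', ?_⟩, ?_⟩
  · rw [Metric.mem_closedBall, dist_pi_le_iff hρ₂.le]
    intro j
    obtain ⟨h3, h4, h5⟩ := hbound j
    rw [Real.dist_eq, abs_le]
    rw [abs_le] at h3
    constructor <;> linarith
  · rw [Metric.mem_closedBall, dist_pi_le_iff hρ₂.le]
    intro j
    obtain ⟨h3, h4, h5⟩ := hbound j
    rw [Real.dist_eq, abs_le, Pi.add_apply]
    rw [abs_le] at h3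
    constructor <;> linarith
  · intro j
    rw [Pi.add_apply, show x j - (x j + v j) = -(v j) by ring, abs_neg,
      abs_of_nonneg (hbound j).2.1]
end

section
/- Dimension of intersections of winning sets: Let n ∈ ℕ, let A be a diagonal (n×n)-matrix with diagonal entries β₁₁,…,β_nn ∈ (0,1/5), let c ∈ (0,1) and ρ₂ > 0. Let I be an at most countable set and, for each i ∈ I, let α_i ∈ (0,1) and S_i ∈ 𝒮(α_i,A,c,ρ₂); set S = ∩_{i∈I} S_i. Suppose there exist α ∈ (0,1) with α^c = Σ_{i∈I} α_i^c and δ ∈ (0,1) such that α^c ≤ δ²(1 − (∏_{j=1}^n β_jj)^{1−c}) < 1 and 3^{−n}∏_{j=1}^n (1 − 5β_jj^{⌊δα^{−1}⌋}) > 8^n(1 + 2^{2n+1})δ. Then for every y ∈ ℝ^n, the set S ∩ (A(B[0,ρ₂]) + y) is non-empty and dim_H(S ∩ (A(B[0,ρ₂]) + y)) ≥ max{n − K₁·α/|log β_max|, 0}, where β_max = max_j β_jj and K₁ = 2δ^{−1}|log(3^{−n}∏_{j=1}^n (1 − 5β_jj^{⌊δα^{−1}⌋}) − 8^n(1 + 2^{2n+1})δ)|.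 -/
open scoped ENNReal

namespace PG

open MeasureTheory

lemma gameBox_eq {n : ℕ} (β : Fin n → ℝ) (t r : ℝ) (y : Fin n → ℝ) :
    gameBox β t r y = Set.Icc (y - fun j => β j ^ t * r) (y + fun j => β j ^ t * r) := by
  ext x
  simp only [gameBox, Set.mem_ofPred_eq, Set.mem_Icc, Pi.le_def, Pi.sub_apply, Pi.add_apply,
    ← forall_and, abs_le]
  refine forall_congr' fun j => ?_
  constructor <;> rintro ⟨h1, h2⟩ <;> constructor <;> linarith

lemma card_hit {n : ℕ} {ι : Type*} (s : Finset ι) (z : ι → Fin n → ℝ) (l m : Fin n → ℝ)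
    (hl : ∀ j, 0 < l j) (hm : ∀ j, 0 ≤ m j) (y : Fin n → ℝ)
    (disj : ∀ v ∈ s, ∀ w ∈ s, v ≠ w →
      Disjoint (Set.Icc (z v - l) (z v + l)) (Set.Icc (z w - l) (z w + l)))
    (hit : ∀ v ∈ s, (Set.Icc (y - m) (y + m) ∩ Set.Icc (z v - l) (z v + l)).Nonempty) :
    (s.card : ℝ) * ∏ j, l j ≤ ∏ j, (m j + 2 * l j) := by
  have h1 : volume (⋃ v ∈ s, Set.Icc (z v - l) (z v + l))
      ≤ volume (Set.Icc (y - (m + (l + l))) (y + (m + (l + l)))) := by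
    apply measure_mono
    intro x hx
    simp only [Set.mem_iUnion] at hx
    obtain ⟨v, hv, hx⟩ := hx
    obtain ⟨u, hu1, hu2⟩ := hit v hv
    simp only [Set.mem_Icc, Pi.le_def, Pi.sub_apply, Pi.add_apply] at *
    constructor <;> intro j
    · linarith [hu1.1 j, hu2.2 j, hx.1 j]
    · linarith [hu1.2 j, hu2.1 j, hx.2 j]
  rw [measure_biUnion_finset (fun v hv w hw h => disj v hv w hw h)
    (fun _ _ => measurableSet_Icc)] at h1
  have e1 : ∀ v, volume (Set.Icc (z v - l) (z v + l)) = ENNReal.ofReal (∏ j, (2 * l j)) := by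
    intro v
    rw [Real.volume_Icc_pi, ENNReal.ofReal_prod_of_nonneg (fun j _ => by linarith [hl j])]
    refine Finset.prod_congr rfl fun j _ => ?_
    congr 1
    simp only [Pi.add_apply, Pi.sub_apply]; ring
  have e2 : volume (Set.Icc (y - (m + (l + l))) (y + (m + (l + l))))
      = ENNReal.ofReal (∏ j, (2 * (m j + 2 * l j))) := by
    rw [Real.volume_Icc_pi,
      ENNReal.ofReal_prod_of_nonneg (fun j _ => by linarith [hl j, hm j])]
    refine Finset.prod_congr rfl fun j _ => ?_
    congr 1
    simp only [Pi.add_apply, Pi.sub_apply]; ring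
  simp only [e1, e2, Finset.sum_const, nsmul_eq_mul] at h1
  rw [← ENNReal.ofReal_natCast, ← ENNReal.ofReal_mul (by positivity),
    ENNReal.ofReal_le_ofReal_iff
      (Finset.prod_nonneg fun j _ => by linarith [hl j, hm j])] at h1
  rw [Finset.prod_mul_distrib, Finset.prod_mul_distrib] at h1
  have : (0 : ℝ) < ∏ _j : Fin n, 2 := by positivity
  nlinarith

lemma sub_of_center {n : ℕ} (β : Fin n → ℝ) (t s r : ℝ) (x y : Fin n → ℝ)
    (h : ∀ j, |x j - y j| ≤ β j ^ s * r - β j ^ t * r) :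
    gameBox β t r x ⊆ gameBox β s r y := by
  intro z hz j
  have := hz j
  have := h j
  have := abs_sub_le (z j) (x j) (y j)
  linarith

/-- merged strategy -/
lemma merge {n : ℕ} (β : Fin n → ℝ) (hβ : ∀ j, 0 < β j)
    (c : ℝ) (hc : c ∈ Set.Ioo (0 : ℝ) 1) (ρ₂ : ℝ)
    (I : Type) [Countable I] (αf : I → ℝ) (hαf : ∀ i, αf i ∈ Set.Ioo (0 : ℝ) 1)
    (S : I → Set (Fin n → ℝ)) (hS : ∀ i, S i ∈ winFamily β (αf i) c ρ₂)
    (α : ℝ) (hα : α ∈ Set.Ioo (0 : ℝ) 1) (hαsum : α ^ c = ∑' i, αf i ^ c) :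
    IsWinning β α c ρ₂ ρ₂ (⋂ i, S i) := by
  choose ρ hρ σ hσ1 hσ2 using hS
  refine ⟨fun r m b => ⋃ i, σ i r m b, ?_, ?_⟩
  · intro r m b h1 h2 h3
    have hL : ∀ i, LegalMove β (αf i) c m (σ i r m b) := fun i =>
      hσ1 i r m b h1 (h2.trans (hρ i)) h3
    refine ⟨Set.countable_iUnion fun i => (hL i).1, ?_, ?_⟩
    · intro p hp
      obtain ⟨i, hi⟩ := Set.mem_iUnion.1 hp
      exact (hL i).2.1 p hi
    · rw [if_pos hc.1]
      have hsum : Summable fun i => αf i ^ c := by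
        by_contra hns
        rw [tsum_eq_zero_of_not_summable hns] at hαsum
        exact (Real.rpow_pos_of_pos hα.1 c).ne' hαsum
      have hP : 0 < ∏ j, β j ^ (m + 1 : ℝ) :=
        Finset.prod_pos fun j _ => Real.rpow_pos_of_pos (hβ j) _
      calc _ ≤ ∑' i, ∑' p : σ i r m b, ENNReal.ofReal ((∏ j, β j ^ p.1.1) ^ c) :=
            ENNReal.tsum_iUnion_le_tsum
              (fun p : ℝ × (Fin n → ℝ) => ENNReal.ofReal ((∏ j, β j ^ p.1) ^ c)) _
        _ ≤ ∑' i, ENNReal.ofReal ((αf i * ∏ j, β j ^ (m + 1 : ℝ)) ^ c) := by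
            refine ENNReal.tsum_le_tsum fun i => ?_
            have := (hL i).2.2
            rwa [if_pos hc.1] at this
        _ = ∑' i, ENNReal.ofReal (αf i ^ c * (∏ j, β j ^ (m + 1 : ℝ)) ^ c) := by
            refine tsum_congr fun i => ?_
            rw [Real.mul_rpow (hαf i).1.le hP.le]
        _ = ENNReal.ofReal (α ^ c * (∏ j, β j ^ (m + 1 : ℝ)) ^ c) := by
            rw [← ENNReal.ofReal_tsum_of_nonneg, tsum_mul_right, hαsum]
            · intro i
              have := (hαf i).1
              positivity
            · exact hsum.mul_right _
        _ = _ := by rw [Real.mul_rpow hα.1.le hP.le]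
  · intro r b h1 h2 h3 x hx hd
    refine Set.mem_iInter.2 fun i => hσ2 i r b h1 (h2.trans (hρ i)) h3 x hx ?_
    intro h
    apply hd
    simp only [Set.mem_iUnion] at h ⊢
    obtain ⟨m, p, hp, hx⟩ := h
    exact ⟨m, p, ⟨i, hp⟩, hx⟩

end PG

namespace PG

open MeasureTheory

/-- one backward step of the chain of left end points -/
noncomputable def stp (β : ℝ) (k : ℕ) (a : ℝ) : ℝ := min (β ^ k * ⌊a / β ^ k⌋₊) (2 - 2 * β ^ k)

noncomputable def pos (β : ℝ) (N : ℕ) (v : ℝ) : ℕ → ℝ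
  | 0 => v
  | i + 1 => stp β (N - (i + 1)) (pos β N v i)

noncomputable def chn (β : ℝ) (N : ℕ) (v : ℝ) (k : ℕ) : ℝ := pos β N v (N - k)

lemma stp_facts (β : ℝ) (h0 : 0 < β) (h1 : β < 1 / 5) (k : ℕ) (a : ℝ) (ha : 0 ≤ a)
    (ha' : a ≤ 2 - 2 * β ^ (k + 1)) :
    0 ≤ stp β k a ∧ stp β k a ≤ 2 - 2 * β ^ k ∧ stp β k a ≤ a ∧
      a + 2 * β ^ (k + 1) ≤ stp β k a + 2 * β ^ k := by
  have hp : 0 < β ^ k := by positivity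
  have hp1 : β ^ k ≤ 1 := pow_le_one₀ h0.le (by linarith)
  have hfl : (⌊a / β ^ k⌋₊ : ℝ) ≤ a / β ^ k := Nat.floor_le (by positivity)
  have hfl2 : a / β ^ k < ⌊a / β ^ k⌋₊ + 1 := Nat.lt_floor_add_one _
  rw [le_div_iff₀ hp] at hfl
  rw [div_lt_iff₀ hp] at hfl2
  rw [pow_succ] at ha' ⊢
  unfold stp
  refine ⟨le_min (by positivity) (by linarith), min_le_right _ _,
    (min_le_left _ _).trans (by linarith), ?_⟩
  rcases min_cases (β ^ k * (⌊a / β ^ k⌋₊ : ℝ)) (2 - 2 * β ^ k) with h | h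
  · rw [h.1]; nlinarith
  · rw [h.1]; nlinarith

lemma chn_top (β : ℝ) (N : ℕ) (v : ℝ) : chn β N v N = v := by simp [chn, pos]

lemma chn_step (β : ℝ) (N : ℕ) (v : ℝ) (k : ℕ) (hk : k < N) :
    chn β N v k = stp β k (chn β N v (k + 1)) := by
  unfold chn
  obtain ⟨i, hi⟩ : ∃ i, N - k = i + 1 := ⟨N - k - 1, by omega⟩
  have h2 : N - (k + 1) = i := by omega
  rw [hi, h2, pos]
  congr 1
  omega

lemma chn_bd (β : ℝ) (h0 : 0 < β) (h1 : β < 1 / 5) (N : ℕ) (v : ℝ) (hv : 0 ≤ v)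
    (hv' : v ≤ 2 - 2 * β ^ N) (i : ℕ) : ∀ k, k + i = N →
    0 ≤ chn β N v k ∧ chn β N v k ≤ 2 - 2 * β ^ k := by
  induction i with
  | zero => intro k hk; obtain rfl : k = N := by omega
            rw [chn_top]; exact ⟨hv, hv'⟩
  | succ i ih =>
    intro k hk
    have := ih (k + 1) (by omega)
    rw [chn_step β N v k (by omega)]
    have := stp_facts β h0 h1 k _ this.1 this.2
    exact ⟨this.1, this.2.1⟩

lemma chn_nest (β : ℝ) (h0 : 0 < β) (h1 : β < 1 / 5) (N : ℕ) (v : ℝ) (hv : 0 ≤ v)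
    (hv' : v ≤ 2 - 2 * β ^ N) (k : ℕ) (hk : k < N) :
    chn β N v k ≤ chn β N v (k + 1) ∧
      chn β N v (k + 1) + 2 * β ^ (k + 1) ≤ chn β N v k + 2 * β ^ k := by
  have := chn_bd β h0 h1 N v hv hv' (N - (k + 1)) (k + 1) (by omega)
  have := stp_facts β h0 h1 k _ this.1 this.2
  rw [chn_step β N v k hk]
  exact ⟨this.2.2.1, this.2.2.2⟩

lemma chn_zero (β : ℝ) (h0 : 0 < β) (h1 : β < 1 / 5) (N : ℕ) (v : ℝ) (hv : 0 ≤ v)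
    (hv' : v ≤ 2 - 2 * β ^ N) : chn β N v 0 = 0 := by
  have := chn_bd β h0 h1 N v hv hv' N 0 (by omega)
  simp at this
  linarith

lemma chn_det (β : ℝ) (N : ℕ) (v w : ℝ) (k : ℕ) (hk : k ≤ N) (h : chn β N v k = chn β N w k)
    (i : ℕ) : ∀ l, l + i = k → chn β N v l = chn β N w l := by
  induction i with
  | zero => intro l hl; obtain rfl : l = k := by omega
            exact h
  | succ i ih =>
    intro l hl
    rw [chn_step β N v l (by omega), chn_step β N w l (by omega), ih (l + 1) (by omega)]

lemma chn_mem (β : ℝ) (h0 : 0 < β) (h1 : β < 1 / 5) (N : ℕ) (v : ℝ) (hv : 0 ≤ v)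
    (hv' : v ≤ 2 - 2 * β ^ N) (k : ℕ) (hk : k < N) :
    chn β N v k ∈ (Finset.range (⌊2 / β ^ k⌋₊ + 1)).image
      (fun m : ℕ => min (β ^ k * m) (2 - 2 * β ^ k)) := by
  have := chn_bd β h0 h1 N v hv hv' (N - (k + 1)) (k + 1) (by omega)
  rw [chn_step β N v k hk, Finset.mem_image]
  refine ⟨⌊chn β N v (k + 1) / β ^ k⌋₊, ?_, rfl⟩
  rw [Finset.mem_range, Nat.lt_succ_iff]
  apply Nat.floor_le_floor
  have : 0 < β ^ (k + 1) := by positivity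
  gcongr
  linarith

lemma card_chn (β : ℝ) (h0 : 0 < β) (h1 : β < 1 / 5) (k : ℕ) :
    ((⌊2 / β ^ k⌋₊ + 1 : ℕ) : ℝ) ≤ 3 / β ^ k := by
  have hp : 0 < β ^ k := by positivity
  have hp1 : β ^ k ≤ 1 := pow_le_one₀ h0.le (by linarith)
  have hfl : (⌊2 / β ^ k⌋₊ : ℝ) ≤ 2 / β ^ k := Nat.floor_le (by positivity)
  have : 1 ≤ 1 / β ^ k := by rw [le_div_iff₀ hp]; linarith
  push_cast
  calc _ ≤ 2 / β ^ k + 1 / β ^ k := by linarith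
    _ = _ := by ring

lemma sumHit {n : ℕ} (β : Fin n → ℝ) (hβ : ∀ j, 0 < β j) (hβ1 : ∀ j, β j < 1)
    (ρ : ℝ) (hρ : 0 < ρ) (c : ℝ) (hc0 : 0 < c) (hc1 : c < 1) (δ : ℝ) (hδ : 0 < δ) (L : ℝ)
    {ι : Type*} (s : Finset ι) (z : ι → Fin n → ℝ)
    (disj : ∀ v ∈ s, ∀ w ∈ s, v ≠ w → Disjoint (gameBox β L ρ (z v)) (gameBox β L ρ (z w)))
    (M : Set (ℝ × (Fin n → ℝ))) (Y : ℝ) (hY : 0 < Y)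
    (hM : ∑' p : M, ENNReal.ofReal (((∏ j, β j) ^ p.1.1) ^ c) ≤ ENNReal.ofReal (Y ^ c)) :
    ∑ v ∈ s, ∑' p : ({p | p ∈ M ∧ (gameBox β p.1 ρ p.2 ∩ gameBox β L ρ (z v)).Nonempty} :
        Set (ℝ × (Fin n → ℝ))),
      min 1 (ENNReal.ofReal (((∏ j, β j) ^ p.1.1) ^ c / (δ * ((∏ j, β j) ^ L) ^ c))) ≤
    ENNReal.ofReal (3 ^ n * (Y / (∏ j, β j) ^ L + Y ^ c / (δ * ((∏ j, β j) ^ L) ^ c))) := by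
  classical
  set P := ∏ j, β j with hPdef
  have hP : 0 < P := Finset.prod_pos fun j _ => hβ j
  have hprod : ∀ q : ℝ, ∏ j, β j ^ q = P ^ q := fun q =>
    Real.finsetProd_rpow _ _ (fun j _ => (hβ j).le) q
  set X := P ^ L with hX
  have hXpos : 0 < X := Real.rpow_pos_of_pos hP _
  set f : ℝ × (Fin n → ℝ) → ENNReal := fun p =>
    min 1 (ENNReal.ofReal ((P ^ p.1) ^ c / (δ * X ^ c))) with hf
  let H : ι → Set (ℝ × (Fin n → ℝ)) := fun v =>
    {p | p ∈ M ∧ (gameBox β p.1 ρ p.2 ∩ gameBox β L ρ (z v)).Nonempty}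
  have key : ∀ p ∈ M, ∑ v ∈ s, (H v).indicator f p ≤
      ENNReal.ofReal ((P ^ p.1) ^ c) *
        ENNReal.ofReal (3 ^ n * (Y ^ (1 - c) / X + 1 / (δ * X ^ c))) := by
    intro p hp
    set w := P ^ p.1 with hw
    have hwpos : 0 < w := Real.rpow_pos_of_pos hP _
    have hwY : w ≤ Y := by
      have : ENNReal.ofReal (w ^ c) ≤ ENNReal.ofReal (Y ^ c) :=
        (ENNReal.le_tsum (f := fun p : M => ENNReal.ofReal ((P ^ p.1.1) ^ c)) ⟨p, hp⟩).trans hM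
      rw [ENNReal.ofReal_le_ofReal_iff (by positivity)] at this
      exact (Real.rpow_le_rpow_iff hwpos.le hY.le hc0).1 this
    set t := s.filter fun v => (gameBox β p.1 ρ p.2 ∩ gameBox β L ρ (z v)).Nonempty with ht
    have hcard : (t.card : ℝ) * ∏ j, (β j ^ L * ρ) ≤
        ∏ j, (β j ^ p.1 * ρ + 2 * (β j ^ L * ρ)) := by
      refine card_hit t z (fun j => β j ^ L * ρ) (fun j => β j ^ p.1 * ρ)
        (fun j => mul_pos (Real.rpow_pos_of_pos (hβ j) _) hρ)
        (fun j => (mul_pos (Real.rpow_pos_of_pos (hβ j) _) hρ).le) p.2 ?_ ?_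
      · intro v hv w hw hne
        have := disj v (Finset.mem_filter.1 hv).1 w (Finset.mem_filter.1 hw).1 hne
        rwa [gameBox_eq, gameBox_eq] at this
      · intro v hv
        have := (Finset.mem_filter.1 hv).2
        rwa [gameBox_eq, gameBox_eq] at this
    have hρn : 0 < ρ ^ n := by positivity
    have hsum : ∑ v ∈ s, (H v).indicator f p = t.card * f p := by
      rw [ht, Finset.card_filter, Nat.cast_sum, Finset.sum_mul]
      refine Finset.sum_congr rfl fun v hv => ?_
      by_cases h : (gameBox β p.1 ρ p.2 ∩ gameBox β L ρ (z v)).Nonempty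
      · have : p ∈ H v := ⟨hp, h⟩
        rw [Set.indicator_of_mem this]
        simp [h]
      · have : p ∉ H v := fun h' => h h'.2
        rw [Set.indicator_of_notMem this]
        simp [h]
    rw [hsum, ← ENNReal.ofReal_mul (by positivity), ← ENNReal.ofReal_natCast]
    have hlhs : ∏ j, (β j ^ L * ρ) = X * ρ ^ n := by
      rw [Finset.prod_mul_distrib, hprod]; simp [hX]
    rw [hlhs] at hcard
    have hw1 : w ≤ w ^ c * Y ^ (1 - c) := by
      calc w = w ^ c * w ^ (1 - c) := by rw [← Real.rpow_add hwpos]; simp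
        _ ≤ _ := by gcongr
    rcases le_total p.1 L with hpl | hpl
    · have h3 : ∏ j, (β j ^ p.1 * ρ + 2 * (β j ^ L * ρ)) ≤ 3 ^ n * w * ρ ^ n := by
        calc _ ≤ ∏ j, (3 * (β j ^ p.1) * ρ) := by
              refine Finset.prod_le_prod (fun j _ => ?_) (fun j _ => ?_)
              · have := hβ j; positivity
              · have := Real.rpow_le_rpow_of_exponent_ge (hβ j) (hβ1 j).le hpl
                nlinarith
          _ = _ := by
              rw [Finset.prod_mul_distrib, Finset.prod_mul_distrib, hprod]; simp [hw]
      have h4 : (t.card : ℝ) ≤ 3 ^ n * (w / X) := by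
        rw [← mul_div_assoc, le_div_iff₀ hXpos]
        nlinarith
      calc _ ≤ ENNReal.ofReal (t.card : ℝ) * 1 := by gcongr; exact min_le_left _ _
        _ = ENNReal.ofReal (t.card : ℝ) := mul_one _
        _ ≤ _ := by
          apply ENNReal.ofReal_le_ofReal
          calc (t.card : ℝ) ≤ 3 ^ n * (w / X) := h4
            _ ≤ 3 ^ n * (w ^ c * Y ^ (1 - c) / X) := by gcongr
            _ ≤ 3 ^ n * (w ^ c * Y ^ (1 - c) / X) + 3 ^ n * w ^ c * (1 / (δ * X ^ c)) := by
                have : 0 ≤ 3 ^ n * w ^ c * (1 / (δ * X ^ c)) := by positivity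
                linarith
            _ = _ := by ring
    · have h3 : ∏ j, (β j ^ p.1 * ρ + 2 * (β j ^ L * ρ)) ≤ 3 ^ n * X * ρ ^ n := by
        calc _ ≤ ∏ j, (3 * (β j ^ L) * ρ) := by
              refine Finset.prod_le_prod (fun j _ => ?_) (fun j _ => ?_)
              · have := hβ j; positivity
              · have := Real.rpow_le_rpow_of_exponent_ge (hβ j) (hβ1 j).le hpl
                nlinarith
          _ = _ := by
              rw [Finset.prod_mul_distrib, Finset.prod_mul_distrib, hprod]; simp [hX]
      have h4 : (t.card : ℝ) ≤ 3 ^ n := by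
        have : 0 < X * ρ ^ n := by positivity
        nlinarith
      calc _ ≤ ENNReal.ofReal (t.card : ℝ) * ENNReal.ofReal (w ^ c / (δ * X ^ c)) := by
            gcongr; exact min_le_right _ _
        _ = ENNReal.ofReal (t.card * (w ^ c / (δ * X ^ c))) := by
            rw [← ENNReal.ofReal_mul (by positivity)]
        _ ≤ _ := by
          apply ENNReal.ofReal_le_ofReal
          calc (t.card : ℝ) * (w ^ c / (δ * X ^ c)) ≤ 3 ^ n * (w ^ c / (δ * X ^ c)) := by gcongr
            _ ≤ 3 ^ n * (w ^ c * Y ^ (1 - c) / X) + 3 ^ n * (w ^ c / (δ * X ^ c)) := by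
                have : 0 ≤ 3 ^ n * (w ^ c * Y ^ (1 - c) / X) := by positivity
                linarith
            _ = _ := by ring
  calc _ = ∑ v ∈ s, ∑' p, (H v).indicator f p := by
        refine Finset.sum_congr rfl fun v _ => ?_
        exact tsum_subtype (H v) f
    _ = ∑' p, ∑ v ∈ s, (H v).indicator f p := by
        rw [Summable.tsum_finsetSum]; exact fun _ _ => ENNReal.summable
    _ ≤ ∑' p, M.indicator (fun p => ENNReal.ofReal ((P ^ p.1) ^ c) *
        ENNReal.ofReal (3 ^ n * (Y ^ (1 - c) / X + 1 / (δ * X ^ c)))) p := by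
        refine ENNReal.tsum_le_tsum fun p => ?_
        by_cases hp : p ∈ M
        · rw [Set.indicator_of_mem hp]; exact key p hp
        · rw [Set.indicator_of_notMem hp]
          refine le_of_eq (Finset.sum_eq_zero fun v _ => ?_)
          exact Set.indicator_of_notMem (fun h => hp h.1) _
    _ = (∑' p : M, ENNReal.ofReal ((P ^ p.1.1) ^ c)) *
        ENNReal.ofReal (3 ^ n * (Y ^ (1 - c) / X + 1 / (δ * X ^ c))) := by
        rw [← tsum_subtype, ENNReal.tsum_mul_right]
    _ ≤ ENNReal.ofReal (Y ^ c) *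
        ENNReal.ofReal (3 ^ n * (Y ^ (1 - c) / X + 1 / (δ * X ^ c))) := by gcongr
    _ = _ := by
        rw [← ENNReal.ofReal_mul (by positivity)]
        congr 1
        have : Y ^ c * Y ^ (1 - c) = Y := by rw [← Real.rpow_add hY]; simp
        calc _ = 3 ^ n * ((Y ^ c * Y ^ (1 - c)) / X + Y ^ c / (δ * X ^ c)) := by ring
          _ = _ := by rw [this]

end PG

namespace PG

lemma numeric {n : ℕ} (hn : 0 < n) (p c α δ θ : ℝ) (N : ℕ) (L : ℝ) (hp : 0 < p) (hp1 : p < 1)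
    (hc0 : 0 < c) (hc1 : c < 1) (hα : 0 < α) (hα1 : α < 1) (hδ : 0 < δ) (hδ1 : δ < 1)
    (hθ : 0 < θ) (hθδ : θ ≤ δ) (hθc : θ ^ c = δ) (hN : N = ⌊δ / α⌋₊) (hN1 : 1 ≤ N)
    (h1 : α ^ c ≤ δ ^ 2 * (1 - p ^ (1 - c))) :
    3 ^ n * (θ * p ^ L / p ^ (L + N) + (θ * p ^ L) ^ c / (δ * (p ^ (L + N)) ^ c)) +
      ∑ k ∈ Finset.range N, (3 ^ n / p ^ k) *
        (3 ^ n * (α * p ^ (L + k) / p ^ (L + N) +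
          (α * p ^ (L + k)) ^ c / (δ * (p ^ (L + N)) ^ c)))
    ≤ 8 ^ n * (1 + 2 ^ (2 * n + 1)) * δ / p ^ N := by
  set r := p ^ (1 - c) with hr
  have hr0 : 0 < r := Real.rpow_pos_of_pos hp _
  have hr1 : r < 1 := Real.rpow_lt_one hp.le hp1 (by linarith)
  have hpN : 0 < p ^ N := by positivity
  have hNle : (N : ℝ) ≤ δ / α := by rw [hN]; exact Nat.floor_le (by positivity)
  have hNα : (N : ℝ) * α ≤ δ := by rwa [le_div_iff₀ hα] at hNle
  have hNlt : δ / α < N + 1 := by rw [hN]; exact Nat.lt_floor_add_one _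
  have hN2 : δ < 2 * N * α := by
    rw [div_lt_iff₀ hα] at hNlt
    have : (1 : ℝ) ≤ N := by exact_mod_cast hN1
    nlinarith
  -- auxiliary powers
  have e1 : ∀ k ≤ N, p ^ (L + (k : ℕ)) / p ^ (L + N) = p ^ k / p ^ N := by
    intro k _
    rw [Real.rpow_add hp, Real.rpow_add hp, Real.rpow_natCast, Real.rpow_natCast]
    have : p ^ L ≠ 0 := (Real.rpow_pos_of_pos hp _).ne'
    field_simp
  have e2 : ∀ k ≤ N, (p ^ (L + (k : ℕ))) ^ c / (p ^ (L + N)) ^ c = p ^ k / p ^ N * r ^ (N - k) := by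
    intro k hk
    rw [← Real.div_rpow (by positivity) (by positivity), e1 k hk]
    have : p ^ k / p ^ N = (p ^ (N - k))⁻¹ := by
      rw [eq_comm, inv_eq_iff_eq_inv, inv_div, eq_div_iff (by positivity), ← pow_add]
      congr 1; omega
    rw [this, hr, ← Real.rpow_natCast (p ^ (1 - c)), ← Real.rpow_mul hp.le,
      ← Real.rpow_natCast p, ← Real.rpow_neg hp.le, ← Real.rpow_mul hp.le, ← Real.rpow_add hp]
    congr 1; ring
  have hαc : 0 < α ^ c := Real.rpow_pos_of_pos hα _
  have hαc' : α ≤ α ^ c := by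
    calc α = α ^ (1 : ℝ) := (Real.rpow_one _).symm
      _ ≤ _ := Real.rpow_le_rpow_of_exponent_ge hα hα1.le hc1.le
  have hrN : r ^ N ≤ 2 * δ := by
    have hb : 1 + (N : ℝ) * (1 / r - 1) ≤ (1 + (1 / r - 1)) ^ N :=
      one_add_mul_le_pow (by have : 0 < 1 / r := by positivity
                             linarith) N
    have hs : 1 - r ≤ 1 / r - 1 := by
      rw [le_sub_iff_add_le, le_div_iff₀ hr0]; nlinarith [sq_nonneg (1 - r)]
    have hb2 : (N : ℝ) * (1 - r) ≤ (1 / r) ^ N := by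
      have : (N : ℝ) * (1 - r) ≤ N * (1 / r - 1) := by gcongr
      have e : 1 + (1 / r - 1) = 1 / r := by ring
      rw [e] at hb
      linarith
    rw [one_div_pow, le_div_iff₀ (by positivity)] at hb2
    have h5 : 1 ≤ 2 * δ * (N * (1 - r)) := by
      have : δ < 2 * N * (δ ^ 2 * (1 - r)) := by
        calc δ < 2 * N * α := hN2
          _ ≤ 2 * N * (δ ^ 2 * (1 - r)) := by gcongr; linarith
      have : δ * 1 < δ * (2 * δ * (N * (1 - r))) := by nlinarith
      exact (lt_of_mul_lt_mul_left this hδ.le).le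
    have : 0 ≤ r ^ N := by positivity
    nlinarith
  have hgeom : ∑ k ∈ Finset.range N, r ^ (N - k) ≤ 1 / (1 - r) := by
    have : ∑ k ∈ Finset.range N, r ^ (N - k) = ∑ k ∈ Finset.range N, r ^ (k + 1) := by
      rw [← Finset.sum_range_reflect]
      refine Finset.sum_congr rfl fun k hk => ?_
      have := Finset.mem_range.1 hk
      congr 1; omega
    rw [this]
    calc _ ≤ ∑ k ∈ Finset.range N, r ^ k := by
          refine Finset.sum_le_sum fun k _ => ?_
          exact pow_le_pow_of_le_one hr0.le hr1.le (by omega)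
      _ = (1 - r ^ N) / (1 - r) := by
          rw [geom_sum_eq hr1.ne, ← neg_div_neg_eq]; ring
      _ ≤ _ := by
          have : 0 < 1 - r := by linarith
          gcongr
          have : 0 < r ^ N := by positivity
          linarith
  have t1 : θ * p ^ L / p ^ (L + N) = θ / p ^ N := by
    have := e1 0 (by omega)
    simp only [Nat.cast_zero, add_zero, pow_zero] at this
    rw [mul_div_assoc, this]; ring
  have t2 : (θ * p ^ L) ^ c / (δ * (p ^ (L + N)) ^ c) = r ^ N / p ^ N := by
    have := e2 0 (by omega)
    simp only [Nat.cast_zero, add_zero, pow_zero, Nat.sub_zero] at this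
    rw [Real.mul_rpow hθ.le (by positivity), hθc, mul_div_mul_left _ _ hδ.ne', this]; ring
  have t3 : ∀ k ∈ Finset.range N, (3 ^ n / p ^ k) *
        (3 ^ n * (α * p ^ (L + k) / p ^ (L + N) +
          (α * p ^ (L + k)) ^ c / (δ * (p ^ (L + N)) ^ c)))
      = 9 ^ n / p ^ N * α + 9 ^ n / p ^ N * (α ^ c / δ) * r ^ (N - k) := by
    intro k hk
    have hk := (Finset.mem_range.1 hk).le
    rw [Real.mul_rpow hα.le (by positivity), mul_div_assoc, e1 k hk, mul_div_mul_comm, e2 k hk]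
    have : (9 : ℝ) ^ n = 3 ^ n * 3 ^ n := by rw [← mul_pow]; norm_num
    rw [this]
    field_simp
  rw [t1, t2, Finset.sum_congr rfl t3, Finset.sum_add_distrib, Finset.sum_const, Finset.card_range,
    nsmul_eq_mul, ← Finset.mul_sum]
  have hs1 : 0 < 1 - r := by linarith
  have t4 : α ^ c / δ * ∑ k ∈ Finset.range N, r ^ (N - k) ≤ δ := by
    calc _ ≤ α ^ c / δ * (1 / (1 - r)) := by gcongr
      _ ≤ (δ ^ 2 * (1 - r)) / δ * (1 / (1 - r)) := by gcongr
      _ = δ := by field_simp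
  have hpow : (3 : ℝ) ^ n * 3 + 9 ^ n * 2 ≤ 8 ^ n * (1 + 2 ^ (2 * n + 1)) := by
    have a1 : (3 : ℝ) ≤ 3 ^ n := by
      calc (3 : ℝ) = 3 ^ 1 := by norm_num
        _ ≤ 3 ^ n := pow_le_pow_right₀ (by norm_num) hn
    have a2 : (9 : ℝ) ^ n = 3 ^ n * 3 ^ n := by rw [← mul_pow]; norm_num
    have a3 : (8 : ℝ) ^ n * 2 ^ (2 * n + 1) = 2 * 32 ^ n := by
      rw [pow_succ, pow_mul, ← mul_assoc, ← mul_pow]; norm_num; ring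
    have a4 : (27 : ℝ) ^ n ≤ 32 ^ n := by gcongr; norm_num
    have a5 : (27 : ℝ) ^ n = 3 ^ n * 9 ^ n := by rw [← mul_pow]; norm_num
    have a6 : (0 : ℝ) < 8 ^ n := by positivity
    have a7 : (0 : ℝ) < 9 ^ n := by positivity
    nlinarith
  calc _ = (3 ^ n * (θ + r ^ N) + 9 ^ n * (N * α) +
        9 ^ n * (α ^ c / δ * ∑ k ∈ Finset.range N, r ^ (N - k))) / p ^ N := by ring
    _ ≤ (3 ^ n * (δ + 2 * δ) + 9 ^ n * δ + 9 ^ n * δ) / p ^ N := by gcongr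
    _ = (3 ^ n * 3 + 9 ^ n * 2) * δ / p ^ N := by ring
    _ ≤ _ := by gcongr

end PG

namespace PG

def Nst {n : ℕ} (β : Fin n → ℝ) (ρ : ℝ) (t0 : ℕ) (b : ℕ → Fin n → ℝ) : Prop :=
  ∀ i < t0, gameBox β ((i : ℕ) + 2 : ℝ) ρ (b (i + 1)) ⊆ gameBox β ((i : ℕ) + 1 : ℝ) ρ (b i)

def hitSet {n : ℕ} (β : Fin n → ℝ) (ρ : ℝ)
    (T : ℕ → (ℕ → Fin n → ℝ) → Set (ℝ × (Fin n → ℝ))) (t0 : ℕ) (b : ℕ → Fin n → ℝ) :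
    Set (ℝ × (Fin n → ℝ)) :=
  {p | (∃ t < t0, p ∈ T t b) ∧
    (gameBox β p.1 ρ p.2 ∩ gameBox β ((t0 : ℕ) + 1 : ℝ) ρ (b t0)).Nonempty}

def Good {n : ℕ} (β : Fin n → ℝ) (ρ c θ : ℝ)
    (T : ℕ → (ℕ → Fin n → ℝ) → Set (ℝ × (Fin n → ℝ))) (t0 : ℕ) (b : ℕ → Fin n → ℝ) : Prop :=
  Nst β ρ t0 b ∧
  ∑' p : hitSet β ρ T t0 b, ENNReal.ofReal (((∏ j, β j) ^ p.1.1) ^ c) ≤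
    ENNReal.ofReal ((θ * (∏ j, β j) ^ ((t0 : ℕ) + 1 : ℝ)) ^ c)

lemma Nst.sub {n : ℕ} {β : Fin n → ℝ} {ρ : ℝ} {t0 : ℕ} {b : ℕ → Fin n → ℝ} (h : Nst β ρ t0 b)
    (s : ℕ) : ∀ t, s ≤ t → t ≤ t0 →
    gameBox β ((t : ℕ) + 1 : ℝ) ρ (b t) ⊆ gameBox β ((s : ℕ) + 1 : ℝ) ρ (b s) := by
  intro t hst
  induction t, hst using Nat.le_induction with
  | base => exact fun _ => subset_rfl
  | succ t ht ih =>
    intro h'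
    refine subset_trans ?_ (ih (by omega))
    have := h t (by omega)
    push_cast
    rw [show (t : ℝ) + 1 + 1 = t + 2 by ring]
    exact this

lemma block {n : ℕ} (hn : 0 < n) (β : Fin n → ℝ) (hβ : ∀ j, β j ∈ Set.Ioo (0 : ℝ) (1 / 5))
    (ρ : ℝ) (hρ : 0 < ρ) (c α δ θ : ℝ) (N : ℕ)
    (hc0 : 0 < c) (hc1 : c < 1) (hα : 0 < α) (hα1 : α < 1) (hδ : 0 < δ) (hδ1 : δ < 1)
    (hθ : 0 < θ) (hθδ : θ ≤ δ) (hθc : θ ^ c = δ) (hN : N = ⌊δ / α⌋₊) (hN1 : 1 ≤ N)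
    (h1 : α ^ c ≤ δ ^ 2 * (1 - (∏ j, β j) ^ (1 - c)))
    (T : ℕ → (ℕ → Fin n → ℝ) → Set (ℝ × (Fin n → ℝ)))
    (hT : ∀ t b b', (∀ i ≤ t, b i = b' i) → T t b = T t b')
    (hleg : ∀ t b, Nst β ρ t b → ∑' p : T t b, ENNReal.ofReal (((∏ j, β j) ^ p.1.1) ^ c) ≤
      ENNReal.ofReal ((α * (∏ j, β j) ^ ((t : ℕ) + 1 : ℝ)) ^ c))
    (t0 : ℕ) (b : ℕ → Fin n → ℝ) (hb : Good β ρ c θ T t0 b) (R : ℕ)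
    (hR : R = ⌈((3 : ℝ)⁻¹ ^ n * ∏ j, (1 - 5 * β j ^ N)
          - 8 ^ n * (1 + 2 ^ (2 * n + 1)) * δ) / (∏ j, β j) ^ N⌉₊) :
    ∃ e : Fin R → ℕ → Fin n → ℝ, (∀ i, ∀ t ≤ t0, e i t = b t) ∧
      (∀ i, Good β ρ c θ T (t0 + N) (e i)) ∧
      (∀ i i', i ≠ i' →
        Disjoint (gameBox β (((t0 + N : ℕ) : ℝ) + 1) ρ (e i (t0 + N)))
          (gameBox β (((t0 + N : ℕ) : ℝ) + 1) ρ (e i' (t0 + N)))) := by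
  classical
  set P := ∏ j, β j with hPdef
  have hβ0 : ∀ j, 0 < β j := fun j => (hβ j).1
  have hβ5 : ∀ j, β j < 1 / 5 := fun j => (hβ j).2
  have hβ1 : ∀ j, β j < 1 := fun j => (hβ5 j).trans (by norm_num)
  have hP : 0 < P := Finset.prod_pos fun j _ => hβ0 j
  have hP1 : P < 1 := by
    have : Nonempty (Fin n) := ⟨⟨0, hn⟩⟩
    calc P < ∏ _j : Fin n, (1 : ℝ) :=
          Finset.prod_lt_prod_of_nonempty (fun j _ => hβ0 j) (fun j _ => hβ1 j)
            Finset.univ_nonempty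
      _ = 1 := by simp
  set h : Fin n → ℝ := fun j => β j ^ ((t0 : ℝ) + 1) * ρ with hh
  have hh0 : ∀ j, 0 < h j := fun j => mul_pos (Real.rpow_pos_of_pos (hβ0 j) _) hρ
  have hlev : ∀ j (k : ℕ), β j ^ (((t0 + k : ℕ) : ℝ) + 1) * ρ = h j * β j ^ k := by
    intro j k
    rw [hh]
    push_cast
    rw [show (t0 : ℝ) + k + 1 = (t0 + 1) + k by ring, Real.rpow_add (hβ0 j), Real.rpow_natCast]
    ring
  let K : Fin n → ℕ := fun j => ⌈(1 / β j ^ N - 5) / 3⌉₊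
  let vp : (∀ j, Fin (K j)) → Fin n → ℝ := fun v j => 3 * β j ^ N * (v j : ℕ)
  have hvp0 : ∀ v j, 0 ≤ vp v j := fun v j => by have := hβ0 j; positivity
  have hvp1 : ∀ v j, vp v j ≤ 2 - 2 * β j ^ N := by
    intro v j
    have h1 : ((v j : ℕ) : ℝ) < (1 / β j ^ N - 5) / 3 := Nat.lt_ceil.1 (v j).2
    have hp : 0 < β j ^ N := pow_pos (hβ0 j) _
    have : vp v j < 1 - 5 * β j ^ N := by
      calc vp v j < 3 * β j ^ N * ((1 / β j ^ N - 5) / 3) := by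
            show 3 * β j ^ N * ((v j : ℕ) : ℝ) < _
            gcongr
        _ = _ := by field_simp
    linarith
  let ext : (∀ j, Fin (K j)) → ℕ → Fin n → ℝ := fun v t =>
    if t ≤ t0 then b t else fun j =>
      b t0 j + h j * (chn (β j) N (vp v j) (t - t0) + β j ^ (t - t0) - 1)
  have ext0 : ∀ v, ∀ t ≤ t0, ext v t = b t := fun v t ht => if_pos ht
  have extk : ∀ v, ∀ k, ext v (t0 + k) = fun j =>
      b t0 j + h j * (chn (β j) N (vp v j) k + β j ^ k - 1) := by
    intro v k
    rcases Nat.eq_zero_or_pos k with rfl | hk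
    · rw [add_zero, ext0 v t0 le_rfl]
      funext j
      rw [chn_zero (β j) (hβ0 j) (hβ5 j) N _ (hvp0 v j) (hvp1 v j)]
      simp
    · simp only [ext]
      rw [if_neg (by omega)]
      simp
  have hnst : ∀ v, Nst β ρ (t0 + N) (ext v) := by
    intro v i hi
    by_cases hit : i < t0
    · rw [ext0 v i hit.le, ext0 v (i + 1) hit]
      exact hb.1 i hit
    · obtain ⟨k, rfl⟩ : ∃ k, i = t0 + k := ⟨i - t0, by omega⟩
      apply sub_of_center
      intro j
      have hk : k < N := by omega
      have e2 : (((t0 + k : ℕ) : ℝ) + 2) = (((t0 + (k + 1) : ℕ) : ℝ) + 1) := by push_cast; ring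
      rw [e2, hlev, hlev, add_assoc, extk, extk]
      have hc := chn_nest (β j) (hβ0 j) (hβ5 j) N _ (hvp0 v j) (hvp1 v j) k hk
      have : (b t0 j + h j * (chn (β j) N (vp v j) (k + 1) + β j ^ (k + 1) - 1)) -
          (b t0 j + h j * (chn (β j) N (vp v j) k + β j ^ k - 1)) =
          h j * ((chn (β j) N (vp v j) (k + 1) + β j ^ (k + 1)) -
            (chn (β j) N (vp v j) k + β j ^ k)) := by ring
      rw [this, abs_mul, abs_of_pos (hh0 j), ← mul_sub]
      refine mul_le_mul_of_nonneg_left ?_ (hh0 j).le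
      rw [abs_le]
      constructor <;> linarith [hc.1, hc.2]
  have hdisj : ∀ v w, v ≠ w →
      Disjoint (gameBox β (((t0 + N : ℕ) : ℝ) + 1) ρ (ext v (t0 + N)))
        (gameBox β (((t0 + N : ℕ) : ℝ) + 1) ρ (ext w (t0 + N))) := by
    intro v w hvw
    obtain ⟨j, hj⟩ := Function.ne_iff.1 hvw
    rw [Set.disjoint_left]
    intro x hx hx'
    have a1 := hx j
    have a2 := hx' j
    rw [hlev, extk] at a1 a2
    beta_reduce at a1 a2
    rw [chn_top] at a1 a2
    have hp : 0 < h j * β j ^ N := mul_pos (hh0 j) (pow_pos (hβ0 j) _)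
    have hne : (1 : ℝ) ≤ |((v j : ℕ) : ℝ) - (w j : ℕ)| := by
      have : ((v j : ℕ) : ℤ) - (w j : ℕ) ≠ 0 := by
        intro h0
        apply hj
        apply Fin.ext
        omega
      have := Int.one_le_abs this
      exact_mod_cast this
    have e : |(b t0 j + h j * (vp v j + β j ^ N - 1)) - (b t0 j + h j * (vp w j + β j ^ N - 1))|
        = 3 * (h j * β j ^ N) * |((v j : ℕ) : ℝ) - (w j : ℕ)| := by
      rw [← abs_of_pos (show 0 < 3 * (h j * β j ^ N) by positivity), ← abs_mul]
      congr 1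
      simp only [vp]
      ring
    have := abs_sub_le (b t0 j + h j * (vp v j + β j ^ N - 1)) (x j)
      (b t0 j + h j * (vp w j + β j ^ N - 1))
    rw [e, abs_sub_comm _ (x j)] at this
    nlinarith
  have hdet : ∀ v w, ∀ k ≤ N, ext v (t0 + k) = ext w (t0 + k) →
      T (t0 + k) (ext v) = T (t0 + k) (ext w) := by
    intro v w k hk he
    apply hT
    intro i hi
    by_cases hit : i ≤ t0
    · rw [ext0 v i hit, ext0 w i hit]
    · obtain ⟨l, rfl⟩ : ∃ l, i = t0 + l := ⟨i - t0, by omega⟩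
      rw [extk, extk]
      funext j
      have : chn (β j) N (vp v j) k = chn (β j) N (vp w j) k := by
        rw [extk, extk] at he
        have := congrFun he j
        simp only [add_right_inj, mul_eq_mul_left_iff, (hh0 j).ne', or_false, sub_left_inj,
          add_left_inj] at this
        exact this
      rw [chn_det (β j) N _ _ k hk this (k - l) l (by omega)]
  let G : ℕ → Finset (Fin n → ℝ) := fun k => Finset.univ.image fun v => ext v (t0 + k)
  have hG : ∀ k < N, ((G k).card : ℝ) ≤ 3 ^ n / P ^ k := by
    intro k hk
    have hsub : G k ⊆ (Fintype.piFinset fun j => (Finset.range (⌊2 / β j ^ k⌋₊ + 1)).image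
        (fun m : ℕ => min (β j ^ k * m) (2 - 2 * β j ^ k))).image
        (fun a j => b t0 j + h j * (a j + β j ^ k - 1)) := by
      intro x hx
      obtain ⟨v, -, rfl⟩ := Finset.mem_image.1 hx
      rw [Finset.mem_image]
      refine ⟨fun j => chn (β j) N (vp v j) k, ?_, (extk v k).symm⟩
      rw [Fintype.mem_piFinset]
      exact fun j => chn_mem (β j) (hβ0 j) (hβ5 j) N _ (hvp0 v j) (hvp1 v j) k hk
    have hc := (Finset.card_le_card hsub).trans Finset.card_image_le
    rw [Fintype.card_piFinset] at hc
    calc ((G k).card : ℝ) ≤ ((∏ j, ((Finset.range (⌊2 / β j ^ k⌋₊ + 1)).image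
        (fun m : ℕ => min (β j ^ k * m) (2 - 2 * β j ^ k))).card : ℕ) : ℝ) := by
          exact_mod_cast hc
      _ = ∏ j, ((((Finset.range (⌊2 / β j ^ k⌋₊ + 1)).image
        (fun m : ℕ => min (β j ^ k * m) (2 - 2 * β j ^ k))).card : ℕ) : ℝ) := by push_cast; rfl
      _ ≤ ∏ j, (3 / β j ^ k) := by
          refine Finset.prod_le_prod (fun j _ => by positivity) fun j _ => ?_
          refine le_trans ?_ (card_chn (β j) (hβ0 j) (hβ5 j) k)
          have := Finset.card_image_le (s := Finset.range (⌊2 / β j ^ k⌋₊ + 1))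
            (f := fun m : ℕ => min (β j ^ k * (m : ℝ)) (2 - 2 * β j ^ k))
          rw [Finset.card_range] at this
          exact_mod_cast this
      _ = 3 ^ n / P ^ k := by
          rw [Finset.prod_div_distrib, Finset.prod_pow]; simp [hPdef]
  set L : ℝ := ((t0 + N : ℕ) : ℝ) + 1 with hL
  have hL' : L = ((t0 : ℝ) + 1) + N := by rw [hL]; push_cast; ring
  set X := P ^ L with hX
  have hX0 : 0 < X := Real.rpow_pos_of_pos hP _
  let f : ℝ × (Fin n → ℝ) → ENNReal := fun p =>
    min 1 (ENNReal.ofReal ((P ^ p.1) ^ c / (δ * X ^ c)))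
  let HS : Set (ℝ × (Fin n → ℝ)) → (∀ j, Fin (K j)) → Set (ℝ × (Fin n → ℝ)) := fun M v =>
    {p | p ∈ M ∧ (gameBox β p.1 ρ p.2 ∩ gameBox β L ρ (ext v (t0 + N))).Nonempty}
  let Φ : (∀ j, Fin (K j)) → ENNReal := fun v => ∑' p : hitSet β ρ T (t0 + N) (ext v), f p
  have hΦ1 : ∀ v, Φ v ≤ ∑' p : HS (hitSet β ρ T t0 b) v, f p +
      ∑ k ∈ Finset.range N, ∑' p : HS (T (t0 + k) (ext v)) v, f p := by
    intro v
    have hsub : hitSet β ρ T (t0 + N) (ext v) ⊆ HS (hitSet β ρ T t0 b) v ∪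
        ⋃ k ∈ Finset.range N, HS (T (t0 + k) (ext v)) v := by
      rintro p ⟨⟨t, ht, hp⟩, hit⟩
      by_cases htt : t < t0
      · left
        refine ⟨⟨⟨t, htt, ?_⟩, ?_⟩, hit⟩
        · rwa [hT t b (ext v) fun i hi => (ext0 v i (by omega)).symm]
        · have := (hnst v).sub t0 (t0 + N) (by omega) le_rfl
          rw [ext0 v t0 le_rfl] at this
          exact hit.mono (Set.inter_subset_inter_right _ this)
      · right
        simp only [Set.mem_iUnion]
        refine ⟨t - t0, Finset.mem_range.2 (by omega), ?_, hit⟩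
        rwa [show t0 + (t - t0) = t by omega]
    calc Φ v ≤ _ := ENNReal.tsum_mono_subtype f hsub
      _ ≤ _ := ENNReal.tsum_union_le f _ _
      _ ≤ _ := by gcongr; exact ENNReal.tsum_biUnion_le f _ _
  have hA : ∀ (s : Finset (∀ j, Fin (K j))) (M : Set (ℝ × (Fin n → ℝ))) (Y : ℝ), 0 < Y →
      ∑' p : M, ENNReal.ofReal ((P ^ p.1.1) ^ c) ≤ ENNReal.ofReal (Y ^ c) →
      ∑ v ∈ s, ∑' p : HS M v, f p ≤
        ENNReal.ofReal (3 ^ n * (Y / X + Y ^ c / (δ * X ^ c))) := by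
    intro s M Y hY hM
    exact sumHit β hβ0 hβ1 ρ hρ c hc0 hc1 δ hδ L s (fun v => ext v (t0 + N))
      (fun v _ w _ hvw => hdisj v w hvw) M Y hY hM
  have hΦk : ∀ k < N, ∑ v, ∑' p : HS (T (t0 + k) (ext v)) v, f p ≤
      ENNReal.ofReal ((3 ^ n / P ^ k) * (3 ^ n * (α * P ^ ((t0 : ℝ) + 1 + k) / X +
        (α * P ^ ((t0 : ℝ) + 1 + k)) ^ c / (δ * X ^ c)))) := by
    intro k hk
    set B := 3 ^ n * (α * P ^ ((t0 : ℝ) + 1 + k) / X +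
        (α * P ^ ((t0 : ℝ) + 1 + k)) ^ c / (δ * X ^ c)) with hB
    have hB0 : 0 ≤ B := by positivity
    calc _ = ∑ g ∈ G k, ∑ v with ext v (t0 + k) = g, ∑' p : HS (T (t0 + k) (ext v)) v, f p := by
          rw [Finset.sum_fiberwise_of_maps_to]
          exact fun v _ => Finset.mem_image_of_mem _ (Finset.mem_univ v)
      _ ≤ ∑ g ∈ G k, ENNReal.ofReal B := by
          refine Finset.sum_le_sum fun g hg => ?_
          obtain ⟨w, -, rfl⟩ := Finset.mem_image.1 hg
          have : ∑ v with ext v (t0 + k) = ext w (t0 + k), ∑' p : HS (T (t0 + k) (ext v)) v, f p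
              = ∑ v with ext v (t0 + k) = ext w (t0 + k),
                ∑' p : HS (T (t0 + k) (ext w)) v, f p := by
            refine Finset.sum_congr rfl fun v hv => ?_
            rw [hdet v w k hk.le (Finset.mem_filter.1 hv).2]
          rw [this]
          refine hA _ _ _ (by positivity) ?_
          have := hleg (t0 + k) (ext w) (fun i hi => hnst w i (by omega))
          push_cast at this
          rwa [show (t0 : ℝ) + k + 1 = t0 + 1 + k by ring] at this
      _ = ENNReal.ofReal ((G k).card * B) := by
          rw [Finset.sum_const, nsmul_eq_mul,
            ENNReal.ofReal_mul (p := ((G k).card : ℝ)) (Nat.cast_nonneg _), ENNReal.ofReal_natCast]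
      _ ≤ _ := by
          apply ENNReal.ofReal_le_ofReal
          exact mul_le_mul_of_nonneg_right (hG k hk) hB0
  have hΦ2 : ∑ v, Φ v ≤ ENNReal.ofReal (8 ^ n * (1 + 2 ^ (2 * n + 1)) * δ / P ^ N) := by
    have hnum := numeric hn P c α δ θ N ((t0 : ℝ) + 1) hP hP1 hc0 hc1 hα hα1 hδ hδ1 hθ hθδ hθc hN
      hN1 h1
    rw [← hL', ← hX] at hnum
    refine le_trans ?_ (ENNReal.ofReal_le_ofReal hnum)
    calc ∑ v, Φ v ≤ ∑ v, (∑' p : HS (hitSet β ρ T t0 b) v, f p +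
          ∑ k ∈ Finset.range N, ∑' p : HS (T (t0 + k) (ext v)) v, f p) :=
          Finset.sum_le_sum fun v _ => hΦ1 v
      _ = ∑ v, ∑' p : HS (hitSet β ρ T t0 b) v, f p +
          ∑ k ∈ Finset.range N, ∑ v, ∑' p : HS (T (t0 + k) (ext v)) v, f p := by
          rw [Finset.sum_add_distrib, Finset.sum_comm (s := Finset.univ)]
      _ ≤ _ := by
          rw [ENNReal.ofReal_add (by positivity)
            (Finset.sum_nonneg fun k _ => by positivity), ENNReal.ofReal_sum_of_nonneg
            (fun k _ => by positivity)]
          refine add_le_add ?_ (Finset.sum_le_sum fun k hk => hΦk k (Finset.mem_range.1 hk))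
          exact hA _ _ _ (by positivity) hb.2
  -- the good boxes
  have hgood : ∀ v, Φ v < 1 → Good β ρ c θ T (t0 + N) (ext v) := by
    intro v hv
    refine ⟨hnst v, ?_⟩
    have hδX : 0 < δ * X ^ c := by positivity
    have e : ∀ p : hitSet β ρ T (t0 + N) (ext v), ENNReal.ofReal ((P ^ p.1.1) ^ c) =
        ENNReal.ofReal (δ * X ^ c) * f p := by
      intro p
      have hp : f p < 1 := lt_of_le_of_lt
        (ENNReal.le_tsum (f := fun p : hitSet β ρ T (t0 + N) (ext v) => f p) p) hv
      have : f p = ENNReal.ofReal ((P ^ p.1.1) ^ c / (δ * X ^ c)) := by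
        rcases min_choice (1 : ENNReal) (ENNReal.ofReal ((P ^ p.1.1) ^ c / (δ * X ^ c))) with h | h
        · exact absurd h hp.ne
        · exact h
      rw [this, ← ENNReal.ofReal_mul hδX.le]
      congr 1
      field_simp
    rw [tsum_congr e, ENNReal.tsum_mul_left]
    have e3 : (θ * P ^ (((t0 + N : ℕ) : ℝ) + 1)) ^ c = δ * X ^ c := by
      rw [Real.mul_rpow hθ.le (by positivity), hθc]
    rw [e3]
    calc _ ≤ ENNReal.ofReal (δ * X ^ c) * 1 := by gcongr
      _ = _ := mul_one _
  let bad : Finset (∀ j, Fin (K j)) := Finset.univ.filter fun v => ¬ Φ v < 1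
  let gd : Finset (∀ j, Fin (K j)) := Finset.univ.filter fun v => Φ v < 1
  have hbad : (bad.card : ℝ) ≤ 8 ^ n * (1 + 2 ^ (2 * n + 1)) * δ / P ^ N := by
    rw [← ENNReal.ofReal_le_ofReal_iff (by positivity), ENNReal.ofReal_natCast]
    refine le_trans ?_ hΦ2
    calc (bad.card : ENNReal) = ∑ v ∈ bad, 1 := by simp
      _ ≤ ∑ v ∈ bad, Φ v := Finset.sum_le_sum fun v hv => not_lt.1 (Finset.mem_filter.1 hv).2
      _ ≤ ∑ v, Φ v := Finset.sum_le_sum_of_subset (Finset.subset_univ _)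
  have htot : (3 : ℝ)⁻¹ ^ n * (∏ j, (1 - 5 * β j ^ N)) / P ^ N ≤ (gd.card : ℝ) + bad.card := by
    have : (gd.card : ℝ) + bad.card = ∏ j, (K j : ℝ) := by
      have := Finset.card_filter_add_card_filter_not (s := (Finset.univ : Finset (∀ j, Fin (K j))))
        (fun v => Φ v < 1)
      rw [Finset.card_univ, Fintype.card_pi] at this
      simp only [Fintype.card_fin] at this
      exact_mod_cast this
    rw [this]
    calc _ = ∏ j, ((3 : ℝ)⁻¹ * (1 - 5 * β j ^ N) / β j ^ N) := by
          rw [Finset.prod_div_distrib, Finset.prod_mul_distrib, Finset.prod_pow]; simp [hPdef]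
      _ ≤ ∏ j, (K j : ℝ) := by
          refine Finset.prod_le_prod (fun j _ => ?_) (fun j _ => ?_)
          · have := hβ0 j
            have h2 : β j ^ N ≤ β j ^ 1 := pow_le_pow_of_le_one this.le (hβ1 j).le hN1
            have : 0 ≤ 1 - 5 * β j ^ N := by linarith [hβ5 j]
            positivity
          · have hp : 0 < β j ^ N := pow_pos (hβ0 j) _
            calc (3 : ℝ)⁻¹ * (1 - 5 * β j ^ N) / β j ^ N = (1 / β j ^ N - 5) / 3 := by
                  field_simp
              _ ≤ _ := Nat.le_ceil _
  have hRc : R ≤ gd.card := by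
    rw [hR, Nat.ceil_le, sub_div]
    linarith
  have hcard : Fintype.card (Fin R) ≤ Fintype.card gd := by simpa using hRc
  obtain ⟨emb⟩ := Function.Embedding.nonempty_of_card_le hcard
  refine ⟨fun i => ext (emb i), fun i t ht => ext0 _ t ht, fun i => ?_, fun i i' hii => ?_⟩
  · exact hgood _ (Finset.mem_filter.1 (emb i).2).2
  · apply hdisj
    intro h
    exact hii (emb.injective (Subtype.ext h))

end PG

namespace PG

open MeasureTheory

lemma tree {n : ℕ} (β : Fin n → ℝ) (hβ0 : ∀ j, 0 < β j) (hP1 : ∏ j, β j < 1)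
    (ρ c θ : ℝ) (N R : ℕ) (hN1 : 1 ≤ N)
    (hc0 : 0 < c) (hρ : 0 < ρ) (hθ : 0 < θ)
    (T : ℕ → (ℕ → Fin n → ℝ) → Set (ℝ × (Fin n → ℝ)))
    (hT : ∀ t b b', (∀ i ≤ t, b i = b' i) → T t b = T t b')
    (hblock : ∀ t0 b, ∃ e : Fin R → ℕ → Fin n → ℝ, Good β ρ c θ T t0 b →
      ((∀ i, ∀ t ≤ t0, e i t = b t) ∧
      (∀ i, Good β ρ c θ T (t0 + N) (e i)) ∧
      (∀ i i', i ≠ i' →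
        Disjoint (gameBox β (((t0 + N : ℕ) : ℝ) + 1) ρ (e i (t0 + N)))
          (gameBox β (((t0 + N : ℕ) : ℝ) + 1) ρ (e i' (t0 + N))))))
    (S : Set (Fin n → ℝ))
    (hS : ∀ b : ℕ → (Fin n → ℝ),
      (∀ m : ℕ, gameBox β ((m : ℕ) + 2 : ℝ) ρ (b (m + 1)) ⊆ gameBox β ((m : ℕ) + 1 : ℝ) ρ (b m)) →
      ∀ x : Fin n → ℝ, (∀ m : ℕ, x ∈ gameBox β ((m : ℕ) + 1 : ℝ) ρ (b m)) →
        x ∉ ⋃ (m : ℕ), ⋃ p ∈ T m b, gameBox β p.1 ρ p.2 → x ∈ S)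
    (y : Fin n → ℝ) :
    ∃ (code : (ℕ → Fin R) → (Fin n → ℝ)) (z : ℕ → (ℕ → Fin R) → (Fin n → ℝ)),
      (∀ ω, code ω ∈ S) ∧ (∀ M ω, code ω ∈ gameBox β (((M * N : ℕ) : ℝ) + 1) ρ (z M ω)) ∧
      (∀ M ω ω', (∀ i < M, ω i = ω' i) → z M ω = z M ω') ∧
      (∀ M ω ω', (∃ i < M, ω i ≠ ω' i) →
        Disjoint (gameBox β (((M * N : ℕ) : ℝ) + 1) ρ (z M ω))
          (gameBox β (((M * N : ℕ) : ℝ) + 1) ρ (z M ω'))) ∧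
      (∀ ω, z 0 ω = y) := by
  have hP : 0 < ∏ j, β j := Finset.prod_pos fun j _ => hβ0 j
  choose e he using hblock
  let cb : (ℕ → Fin R) → ℕ → (ℕ → Fin n → ℝ) := fun ω M =>
    Nat.rec (fun _ => y) (fun M b => e (M * N) b (ω M)) M
  have cb0 : ∀ ω, cb ω 0 = fun _ => y := fun ω => rfl
  have cbs : ∀ ω M, cb ω (M + 1) = e (M * N) (cb ω M) (ω M) := fun ω M => rfl
  have hgood : ∀ ω M, Good β ρ c θ T (M * N) (cb ω M) := by
    intro ω M
    induction M with
    | zero =>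
      refine ⟨fun i hi => by simp at hi, ?_⟩
      have : hitSet β ρ T (0 * N) (cb ω 0) = ∅ := by
        ext p
        simp [hitSet]
      rw [this]
      simp
    | succ M ih =>
      rw [cbs, Nat.succ_mul]
      exact (he _ _ ih).2.1 _
  have hstab1 : ∀ ω M, ∀ t ≤ M * N, cb ω (M + 1) t = cb ω M t := by
    intro ω M t ht
    rw [cbs]
    exact (he _ _ (hgood ω M)).1 _ t ht
  have hstab : ∀ ω M M', M ≤ M' → ∀ t ≤ M * N, cb ω M' t = cb ω M t := by
    intro ω M M' h
    induction M', h using Nat.le_induction with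
    | base => exact fun _ _ => rfl
    | succ k hk ih =>
      intro t ht
      rw [hstab1 ω k t (ht.trans (Nat.mul_le_mul_right N hk)), ih t ht]
  have hdep : ∀ M ω ω', (∀ i < M, ω i = ω' i) → cb ω M = cb ω' M := by
    intro M ω ω' h
    induction M with
    | zero => rfl
    | succ M ih =>
      rw [cbs, cbs, ih fun i hi => h i (by omega), h M (by omega)]
  let bl : (ℕ → Fin R) → ℕ → Fin n → ℝ := fun ω t => cb ω t t
  have hle : ∀ t, t ≤ t * N := fun t => Nat.le_mul_of_pos_right t hN1
  have hbl : ∀ ω M, ∀ t ≤ M * N, bl ω t = cb ω M t := by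
    intro ω M t ht
    show cb ω t t = cb ω M t
    rw [← hstab ω t (max t M) (le_max_left _ _) t (hle t),
      ← hstab ω M (max t M) (le_max_right _ _) t ht]
  have hnst : ∀ ω t0, Nst β ρ t0 (bl ω) := by
    intro ω t0 i hi
    have := (hgood ω (i + 1)).1 i (lt_of_lt_of_le (Nat.lt_succ_self i) (hle _))
    rw [hbl ω (i + 1) (i + 1) (hle _), hbl ω (i + 1) i ((Nat.le_succ i).trans (hle _))]
    exact this
  have hx : ∀ ω, ∃ x, ∀ m : ℕ, x ∈ gameBox β ((m : ℕ) + 1 : ℝ) ρ (bl ω m) := by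
    intro ω
    have := IsCompact.nonempty_iInter_of_sequence_nonempty_isCompact_isClosed
      (fun m : ℕ => gameBox β ((m : ℕ) + 1 : ℝ) ρ (bl ω m)) ?_ ?_ ?_ ?_
    · obtain ⟨x, hx⟩ := this
      exact ⟨x, Set.mem_iInter.1 hx⟩
    · intro m
      exact (hnst ω (m + 1)).sub m (m + 1) (by omega) le_rfl
    · intro m
      refine ⟨bl ω m, fun j => ?_⟩
      have := hβ0 j
      simp only [sub_self, abs_zero]
      positivity
    · rw [gameBox_eq]; exact isCompact_Icc
    · intro m
      rw [gameBox_eq]; exact isClosed_Icc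
  choose code hcode using hx
  refine ⟨code, fun M ω => cb ω M (M * N), ?_, ?_, ?_, ?_, fun ω => rfl⟩
  · intro ω
    refine hS (bl ω) (fun m => hnst ω (m + 1) m (by omega)) (code ω) (hcode ω) ?_
    intro hmem
    simp only [Set.mem_iUnion] at hmem
    obtain ⟨m, p, hp, hxp⟩ := hmem
    have hbound : ∀ M : ℕ, m < M → (∏ j, β j) ^ p.1 ≤ θ * (∏ j, β j) ^ M := by
      intro M hM
      have hmem : p ∈ hitSet β ρ T (M * N) (cb ω M) := by
        refine ⟨⟨m, hM.trans_le (hle M), ?_⟩, code ω, hxp, ?_⟩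
        · rwa [hT m (cb ω M) (bl ω)]
          intro i hi
          exact (hbl ω M i ((hi.trans hM.le).trans (hle M))).symm
        · have := hcode ω (M * N)
          rwa [hbl ω M (M * N) le_rfl] at this
      have h1 := (ENNReal.le_tsum (f := fun p : hitSet β ρ T (M * N) (cb ω M) =>
        ENNReal.ofReal (((∏ j, β j) ^ p.1.1) ^ c)) ⟨p, hmem⟩).trans (hgood ω M).2
      rw [ENNReal.ofReal_le_ofReal_iff (by positivity)] at h1
      have h2 := (Real.rpow_le_rpow_iff (by positivity) (by positivity) hc0).1 h1
      refine h2.trans ?_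
      gcongr
      rw [← Real.rpow_natCast]
      apply Real.rpow_le_rpow_of_exponent_ge hP hP1.le
      have : (M : ℝ) ≤ ((M * N : ℕ) : ℝ) := by exact_mod_cast hle M
      linarith
    have hlim : Filter.Tendsto (fun M : ℕ => θ * (∏ j, β j) ^ M) Filter.atTop (nhds (θ * 0)) :=
      (tendsto_pow_atTop_nhds_zero_of_lt_one hP.le hP1).const_mul θ
    have hpos : 0 < (∏ j, β j) ^ p.1 := Real.rpow_pos_of_pos hP _
    have := ge_of_tendsto hlim (Filter.eventually_atTop.2 ⟨m + 1, fun M hM => hbound M hM⟩)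
    linarith
  · intro M ω
    have := hcode ω (M * N)
    rwa [hbl ω M (M * N) le_rfl] at this
  · intro M ω ω' h
    show cb ω M (M * N) = cb ω' M (M * N)
    rw [hdep M ω ω' h]
  · intro M ω ω' h
    classical
    have hmin := Nat.find_spec h
    set i := Nat.find h with hi
    have hag : ∀ k < i, ω k = ω' k := by
      intro k hk
      by_contra hne
      exact Nat.find_min h hk ⟨by omega, hne⟩
    have hd := (he _ _ (hgood ω i)).2.2 (ω i) (ω' i) hmin.2
    rw [← cbs] at hd
    have e1 : e (i * N) (cb ω i) (ω' i) = cb ω' (i + 1) := by rw [cbs, hdep i ω ω' hag]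
    rw [e1, ← Nat.succ_mul] at hd
    have hsub : ∀ ω, gameBox β (((M * N : ℕ) : ℝ) + 1) ρ (cb ω M (M * N)) ⊆
        gameBox β ((((i + 1) * N : ℕ) : ℝ) + 1) ρ (cb ω (i + 1) ((i + 1) * N)) := by
      intro ω
      rw [← hbl ω M _ le_rfl, ← hbl ω (i + 1) _ le_rfl]
      exact (hnst ω (M * N)).sub _ _ (Nat.mul_le_mul_right N hmin.1) le_rfl
    exact hd.mono (hsub ω) (hsub ω')

lemma mass {n : ℕ} (β : Fin n → ℝ) (hβ0 : ∀ j, 0 < β j) (βm : ℝ) (hβm : ∀ j, β j ≤ βm)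
    (hβm0 : 0 < βm) (hβm1 : βm < 1) (ρ : ℝ) (hρ : 0 < ρ) (N R : ℕ) (hN1 : 1 ≤ N) (hR1 : 1 ≤ R)
    (κ : ℝ) (hκ0 : 0 < κ) (hκ1 : κ ≤ 1) (hR : κ / (∏ j, β j) ^ N ≤ R)
    (code : (ℕ → Fin R) → (Fin n → ℝ)) (z : ℕ → (ℕ → Fin R) → (Fin n → ℝ))
    (hcode : ∀ M ω, code ω ∈ gameBox β (((M * N : ℕ) : ℝ) + 1) ρ (z M ω))
    (hz : ∀ M ω ω', (∀ i < M, ω i = ω' i) → z M ω = z M ω')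
    (hd : ∀ M ω ω', (∃ i < M, ω i ≠ ω' i) →
        Disjoint (gameBox β (((M * N : ℕ) : ℝ) + 1) ρ (z M ω))
          (gameBox β (((M * N : ℕ) : ℝ) + 1) ρ (z M ω')))
    (A : Set (Fin n → ℝ)) (hA : ∀ ω, code ω ∈ A) :
    ENNReal.ofReal ((n : ℝ) - |Real.log κ| / (N * |Real.log βm|)) ≤ dimH A := by
  classical
  set ex := |Real.log κ| / (N * |Real.log βm|) with hex
  set s := (n : ℝ) - ex with hs
  rcases le_or_gt s 0 with hs0 | hs0
  · rw [ENNReal.ofReal_of_nonpos hs0]; exact bot_le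
  have hP : 0 < ∏ j, β j := Finset.prod_pos fun j _ => hβ0 j
  set P := ∏ j, β j with hPdef
  set q := βm ^ N with hq
  have hq0 : 0 < q := by positivity
  have hq1 : q < 1 := pow_lt_one₀ hβm0.le hβm1 (by omega)
  have hlogβ : Real.log βm < 0 := Real.log_neg hβm0 hβm1
  have hlogκ : Real.log κ ≤ 0 := Real.log_nonpos hκ0.le hκ1
  have hex0 : 0 ≤ ex := by positivity
  have hNpos : (0 : ℝ) < N := by exact_mod_cast hN1
  have hqe : q ^ ex = κ := by
    rw [Real.rpow_def_of_pos hq0, hq, Real.log_pow, hex, abs_of_nonpos hlogκ, abs_of_neg hlogβ]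
    have : (N : ℝ) * Real.log βm * (-Real.log κ / (N * -Real.log βm)) = Real.log κ := by
      have := hlogβ.ne
      field_simp
    rw [this, Real.exp_log hκ0]
  have hside : ∀ (M : ℕ) j, β j ^ (((M * N : ℕ) : ℝ) + 1) ≤ q ^ M := by
    intro M j
    have h1 : β j ^ (((M * N : ℕ) : ℝ) + 1) ≤ β j ^ (((M * N : ℕ) : ℝ)) :=
      Real.rpow_le_rpow_of_exponent_ge (hβ0 j) ((hβm j).trans hβm1.le) (by linarith)
    refine h1.trans ?_
    rw [Real.rpow_natCast, hq, ← pow_mul, mul_comm N M]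
    exact pow_le_pow_left₀ (hβ0 j).le (hβm j) _
  -- continuity of the coding map
  have hcont : Continuous code := by
    rw [continuous_iff_continuousAt]
    intro ω
    rw [ContinuousAt, Metric.tendsto_nhds]
    intro ε hε
    have hlim : Filter.Tendsto (fun M : ℕ => 2 * ρ * q ^ M) Filter.atTop (nhds (2 * ρ * 0)) :=
      (tendsto_pow_atTop_nhds_zero_of_lt_one hq0.le hq1).const_mul _
    rw [mul_zero] at hlim
    obtain ⟨M, hM⟩ := (hlim.eventually (gt_mem_nhds hε)).exists
    have hev : ∀ᶠ ω' in nhds ω, ∀ i ∈ Finset.range M, ω' i = ω i := by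
      rw [Filter.eventually_all_finset]
      intro i _
      exact ((continuous_apply i).tendsto ω).eventually
        (show ∀ᶠ x in nhds (ω i), x = ω i by rw [nhds_discrete]; simp)
    filter_upwards [hev] with ω' hω'
    refine lt_of_le_of_lt ?_ hM
    rw [dist_pi_le_iff (by positivity)]
    intro j
    have h1 := hcode M ω j
    have h2 := hcode M ω' j
    rw [hz M ω' ω (fun i hi => hω' i (Finset.mem_range.2 hi))] at h2
    have h3 := hside M j
    rw [Real.dist_eq]
    have h4 := abs_sub_le (code ω' j) (z M ω j) (code ω j)
    rw [abs_sub_comm (z M ω j)] at h4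
    nlinarith
  have hne : Nonempty (Fin R) := ⟨⟨0, hR1⟩⟩
  let u : Measure (Fin R) := (PMF.uniformOfFintype (Fin R)).toMeasure
  have hu : ∀ a, u {a} = ENNReal.ofReal ((R : ℝ)⁻¹) := by
    intro a
    rw [PMF.toMeasure_apply_singleton _ _ (measurableSet_singleton a),
      PMF.uniformOfFintype_apply, Fintype.card_fin,
      ENNReal.ofReal_inv_of_pos (by exact_mod_cast hR1), ENNReal.ofReal_natCast]
  let ν : Measure (ℕ → Fin R) := Measure.infinitePi fun _ => u
  have hcyl : ∀ M (ω : ℕ → Fin R), ν {ω' | ∀ i < M, ω' i = ω i} =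
      ENNReal.ofReal (((R : ℝ)⁻¹) ^ M) := by
    intro M ω
    have : {ω' : ℕ → Fin R | ∀ i < M, ω' i = ω i} =
        ((Finset.range M : Finset ℕ) : Set ℕ).pi fun i => {ω i} := by
      ext ω'
      simp [Set.mem_pi]
    rw [this, Measure.infinitePi_pi _ (fun i _ => measurableSet_singleton _)]
    simp only [hu, Finset.prod_const, Finset.card_range]
    rw [ENNReal.ofReal_pow (by positivity)]
  let μ : Measure (Fin n → ℝ) := ν.map code
  set C : ℝ := (3 / ρ) ^ n / P * κ⁻¹ * ρ ^ ex with hC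
  have hC0 : 0 < C := by positivity
  have hball : ∀ x d, 0 < d → d ≤ ρ → μ (Metric.closedBall x d) ≤ ENNReal.ofReal (C * d ^ s) := by
    intro x d hd0 hdρ
    obtain ⟨m, hm1, hm2⟩ := exists_nat_pow_near_of_lt_one (x := d / ρ) (y := q) (by positivity)
      (by rw [div_le_one hρ]; exact hdρ) hq0 hq1
    set M := m + 1 with hM
    set l : Fin n → ℝ := fun j => β j ^ (((M * N : ℕ) : ℝ) + 1) * ρ with hl
    have hl0 : ∀ j, 0 < l j := fun j => mul_pos (Real.rpow_pos_of_pos (hβ0 j) _) hρ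
    have hld : ∀ j, l j ≤ d := by
      intro j
      have h1 := hside M j
      rw [lt_div_iff₀ hρ] at hm1
      exact (mul_le_mul_of_nonneg_right h1 hρ.le).trans hm1.le
    let ext : (Fin M → Fin R) → ℕ → Fin R := fun w i =>
      if h : i < M then w ⟨i, h⟩ else ⟨0, hR1⟩
    have hext : ∀ (ω : ℕ → Fin R), ∀ i < M, ω i = ext (fun k => ω k) i := by
      intro ω i hi
      simp [ext, hi]
    let hits : Finset (Fin M → Fin R) := Finset.univ.filter fun w =>
      (Set.Icc (x - fun _ => d) (x + fun _ => d) ∩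
        Set.Icc (z M (ext w) - l) (z M (ext w) + l)).Nonempty
    have hcard := card_hit hits (fun w => z M (ext w)) l (fun _ => d) hl0 (fun _ => hd0.le) x
      (by
        intro v _ w _ hvw
        have : ∃ i < M, ext v i ≠ ext w i := by
          obtain ⟨i, hi⟩ := Function.ne_iff.1 hvw
          exact ⟨i, i.2, by simpa [ext] using hi⟩
        have := hd M _ _ this
        rwa [gameBox_eq, gameBox_eq] at this)
      (by intro w hw; exact (Finset.mem_filter.1 hw).2)
    have hsub : code ⁻¹' (Metric.closedBall x d) ⊆
        ⋃ w ∈ hits, {ω' | ∀ i < M, ω' i = ext w i} := by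
      intro ω hω
      simp only [Set.mem_iUnion]
      refine ⟨fun k => ω k, ?_, hext ω⟩
      refine Finset.mem_filter.2 ⟨Finset.mem_univ _, code ω, ?_, ?_⟩
      · have : dist (code ω) x ≤ d := hω
        rw [dist_pi_le_iff hd0.le] at this
        constructor <;> intro j <;>
          · have := abs_le.1 ((Real.dist_eq _ _).symm.le.trans (this j))
            simp only [Pi.sub_apply, Pi.add_apply]
            linarith [this.1, this.2]
      · have := hcode M ω
        rw [hz M ω _ (hext ω), gameBox_eq] at this
        exact this
    have h1 : μ (Metric.closedBall x d) ≤ ENNReal.ofReal (hits.card * ((R : ℝ)⁻¹) ^ M) := by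
      rw [Measure.map_apply hcont.measurable Metric.isClosed_closedBall.measurableSet]
      calc _ ≤ ν (⋃ w ∈ hits, {ω' | ∀ i < M, ω' i = ext w i}) := measure_mono hsub
        _ ≤ ∑ w ∈ hits, ν {ω' | ∀ i < M, ω' i = ext w i} := measure_biUnion_finset_le _ _
        _ = _ := by
          simp only [hcyl, Finset.sum_const, nsmul_eq_mul]
          rw [ENNReal.ofReal_mul (p := (hits.card : ℝ)) (Nat.cast_nonneg _),
            ENNReal.ofReal_natCast]
    refine h1.trans (ENNReal.ofReal_le_ofReal ?_)
    have hl' : ∏ j, l j = P * (P ^ N) ^ M * ρ ^ n := by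
      rw [hl, Finset.prod_mul_distrib, Real.finsetProd_rpow _ _ (fun j _ => (hβ0 j).le),
        Real.rpow_add hP, Real.rpow_natCast, Real.rpow_one, mul_comm M N, pow_mul,
        Finset.prod_const, Finset.card_univ, Fintype.card_fin]
      ring
    have hr' : ∏ j, (d + 2 * l j) ≤ (3 * d) ^ n := by
      calc _ ≤ ∏ _j : Fin n, (3 * d) := by
            refine Finset.prod_le_prod (fun j _ => ?_) (fun j _ => ?_)
            · linarith [hl0 j]
            · linarith [hld j]
        _ = _ := by simp
    rw [hl'] at hcard
    have hcard2 : (hits.card : ℝ) ≤ (3 * d) ^ n / (P * (P ^ N) ^ M * ρ ^ n) := by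
      rw [le_div_iff₀ (by positivity)]; exact hcard.trans hr'
    have hRinv : ((R : ℝ)⁻¹) ≤ P ^ N / κ := by
      rw [← inv_div]
      exact inv_anti₀ (by positivity) hR
    have hκM : (κ⁻¹) ^ m ≤ (d / ρ) ^ (-ex) := by
      calc (κ⁻¹) ^ m = (q ^ m) ^ (-ex) := by
            rw [← hqe, Real.rpow_neg (by positivity), inv_pow, ← Real.rpow_natCast (q ^ ex),
              ← Real.rpow_mul hq0.le, ← Real.rpow_natCast q, ← Real.rpow_mul hq0.le, mul_comm ex]
        _ ≤ _ := Real.rpow_le_rpow_of_nonpos (by positivity) hm2 (by linarith)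
    calc (hits.card : ℝ) * ((R : ℝ)⁻¹) ^ M
        ≤ (3 * d) ^ n / (P * (P ^ N) ^ M * ρ ^ n) * (P ^ N / κ) ^ M := by gcongr
      _ = (3 / ρ) ^ n / P * d ^ n * κ⁻¹ * (κ⁻¹) ^ m := by
          rw [hM, mul_pow, div_pow, div_pow, inv_pow]
          have hk := hκ0.ne'
          have hQ : P ^ N ≠ 0 := (pow_pos hP N).ne'
          generalize P ^ N = Q at hQ
          field_simp
          try ring
      _ ≤ (3 / ρ) ^ n / P * d ^ n * κ⁻¹ * (d / ρ) ^ (-ex) := by gcongr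
      _ = C * d ^ s := by
          rw [hC, hs, Real.rpow_sub hd0, Real.rpow_natCast, Real.div_rpow hd0.le hρ.le,
            Real.rpow_neg hd0.le, Real.rpow_neg hρ.le]
          field_simp
  have hE : ∀ E : Set (Fin n → ℝ), ∀ d, 0 < d → d ≤ ρ → Metric.ediam E ≤ ENNReal.ofReal d →
      μ E ≤ ENNReal.ofReal (C * d ^ s) := by
    intro E d hd0 hdρ hEd
    rcases E.eq_empty_or_nonempty with rfl | ⟨x, hx⟩
    · simp
    · refine (measure_mono ?_).trans (hball x d hd0 hdρ)
      intro y hy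
      rw [Metric.mem_closedBall, ← ENNReal.ofReal_le_ofReal_iff hd0.le, ← edist_dist]
      exact (Metric.edist_le_ediam_of_mem hy hx).trans hEd
  have hle : (ENNReal.ofReal C)⁻¹ • μ ≤ Measure.hausdorffMeasure s := by
    refine Measure.le_hausdorffMeasure s _ (ENNReal.ofReal ρ) (by simpa using hρ) ?_
    intro E hEρ
    have hCne : ENNReal.ofReal C ≠ 0 := by simpa using hC0
    rw [Measure.smul_apply, smul_eq_mul, ENNReal.inv_mul_le_iff hCne ENNReal.ofReal_ne_top]
    have hfin : Metric.ediam E ≠ ⊤ := ne_top_of_le_ne_top ENNReal.ofReal_ne_top hEρ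
    set D := (Metric.ediam E).toReal with hD
    have hDE : Metric.ediam E = ENNReal.ofReal D := (ENNReal.ofReal_toReal hfin).symm
    have hD0 : 0 ≤ D := ENNReal.toReal_nonneg
    have hDρ : D ≤ ρ := by
      rw [hDE] at hEρ
      exact (ENNReal.ofReal_le_ofReal_iff hρ.le).1 hEρ
    rcases hD0.eq_or_lt with h0 | hpos
    · have hz0 : μ E = 0 := by
        have hlim : Filter.Tendsto (fun d : ℝ => ENNReal.ofReal (C * d ^ s))
            (nhdsWithin 0 (Set.Ioi 0)) (nhds 0) := by
          have h1 : Filter.Tendsto (fun d : ℝ => C * d ^ s) (nhds 0) (nhds (C * 0 ^ s)) :=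
            ((Real.continuous_rpow_const hs0.le).tendsto 0).const_mul C
          rw [Real.zero_rpow hs0.ne', mul_zero] at h1
          have h2 := ENNReal.tendsto_ofReal h1
          rw [ENNReal.ofReal_zero] at h2
          exact h2.mono_left nhdsWithin_le_nhds
        refine le_antisymm (ge_of_tendsto hlim ?_) bot_le
        filter_upwards [Ioc_mem_nhdsGT hρ] with d hd
        refine hE E d hd.1 hd.2 ?_
        rw [hDE, ← h0]
        simp
      rw [hz0]; exact bot_le
    · rw [hDE, ENNReal.ofReal_rpow_of_pos hpos, ← ENNReal.ofReal_mul hC0.le]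
      exact hE E D hpos hDρ hDE.le
  have hμA : 1 ≤ μ A := by
    have : ν Set.univ = 1 := measure_univ
    rw [← this]
    calc ν Set.univ ≤ ν (code ⁻¹' A) := measure_mono fun ω _ => hA ω
      _ ≤ _ := Measure.le_map_apply hcont.measurable.aemeasurable A
  have hne0 : Measure.hausdorffMeasure ((s.toNNReal : NNReal) : ℝ) A ≠ 0 := by
    rw [Real.coe_toNNReal s hs0.le]
    have h1 := hle A
    rw [Measure.smul_apply, smul_eq_mul] at h1
    refine (lt_of_lt_of_le ?_ h1).ne'
    refine ENNReal.mul_pos (by simp) ?_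
    exact (lt_of_lt_of_le one_pos hμA).ne'
  exact le_dimH_of_hausdorffMeasure_ne_zero hne0

end PG

/-- **Dimension of intersections of winning sets.**  Let `A` be the diagonal `(n × n)`-matrix
with diagonal entries `β j ∈ (0, 1/5)`, `c ∈ (0,1)` and `ρ₂ > 0`.  Let `I` be at most countable
and, for `i ∈ I`, let `αf i ∈ (0,1)` and `S i ∈ 𝒮(αf i, A, c, ρ₂)`; set `S = ⋂ i, S i`.
Suppose there are `α ∈ (0,1)` with `α^c = Σ_i (αf i)^c` and `δ ∈ (0,1)` with
`α^c ≤ δ²(1 − (∏_j β_j)^{1−c}) < 1` and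
`3^{−n} ∏_j (1 − 5 β_j^{⌊δ/α⌋}) > 8^n (1 + 2^{2n+1}) δ`.  Then for every `y ∈ ℝⁿ`,
`S ∩ (A(B[0,ρ₂]) + y)` is non-empty and has Hausdorff dimension at least
`max{n − K₁ α / |log β_max|, 0}`. -/
theorem intersection_dimension {n : ℕ} (hn : 0 < n)
    (β : Fin n → ℝ) (hβ : ∀ j, β j ∈ Set.Ioo (0 : ℝ) (1 / 5))
    (c : ℝ) (hc : c ∈ Set.Ioo (0 : ℝ) 1) (ρ₂ : ℝ) (hρ₂ : 0 < ρ₂)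
    (I : Type) [Countable I] (αf : I → ℝ) (hαf : ∀ i, αf i ∈ Set.Ioo (0 : ℝ) 1)
    (S : I → Set (Fin n → ℝ)) (hS : ∀ i, S i ∈ winFamily β (αf i) c ρ₂)
    (α : ℝ) (hα : α ∈ Set.Ioo (0 : ℝ) 1) (hαsum : α ^ c = ∑' i, αf i ^ c)
    (δ : ℝ) (hδ : δ ∈ Set.Ioo (0 : ℝ) 1)
    (h1 : α ^ c ≤ δ ^ 2 * (1 - (∏ j, β j) ^ (1 - c)))
    (h1' : δ ^ 2 * (1 - (∏ j, β j) ^ (1 - c)) < 1)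
    (h2 : (3 : ℝ)⁻¹ ^ n * ∏ j, (1 - 5 * β j ^ ⌊δ / α⌋₊)
            > 8 ^ n * (1 + 2 ^ (2 * n + 1)) * δ)
    (βmax : ℝ) (hβmax : IsGreatest (Set.range β) βmax)
    (K₁ : ℝ)
    (hK₁ : K₁ = 2 * δ⁻¹ *
      |Real.log ((3 : ℝ)⁻¹ ^ n * ∏ j, (1 - 5 * β j ^ ⌊δ / α⌋₊)
          - 8 ^ n * (1 + 2 ^ (2 * n + 1)) * δ)|)
    (y : Fin n → ℝ) :
    ((⋂ i, S i) ∩ gameBox β 1 ρ₂ y).Nonempty ∧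
      ENNReal.ofReal ((n : ℝ) - K₁ * α / |Real.log βmax|) ≤
        dimH ((⋂ i, S i) ∩ gameBox β 1 ρ₂ y) := by
  classical
  obtain ⟨hc0, hc1⟩ := hc
  obtain ⟨hα0, hα1⟩ := hα
  obtain ⟨hδ0, hδ1⟩ := hδ
  have hβ0 : ∀ j, 0 < β j := fun j => (hβ j).1
  have hβ1 : ∀ j, β j < 1 := fun j => (hβ j).2.trans (by norm_num)
  have hP : 0 < ∏ j, β j := Finset.prod_pos fun j _ => hβ0 j
  have hP1 : ∏ j, β j < 1 := by
    have : Nonempty (Fin n) := ⟨⟨0, hn⟩⟩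
    calc ∏ j, β j < ∏ _j : Fin n, (1 : ℝ) :=
          Finset.prod_lt_prod_of_nonempty (fun j _ => hβ0 j) (fun j _ => hβ1 j)
            Finset.univ_nonempty
      _ = 1 := by simp
  obtain ⟨N, hN⟩ : ∃ N, N = ⌊δ / α⌋₊ := ⟨_, rfl⟩
  have hαδ : α ≤ δ := by
    have e1 : α ≤ α ^ c := by
      calc α = α ^ (1 : ℝ) := (Real.rpow_one α).symm
        _ ≤ α ^ c := Real.rpow_le_rpow_of_exponent_ge hα0 hα1.le hc1.le
    have e2 : 0 < (∏ j, β j) ^ (1 - c) := Real.rpow_pos_of_pos hP _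
    nlinarith [mul_pos (pow_pos hδ0 2) e2]
  have hN1 : 1 ≤ N := by
    rw [hN, Nat.one_le_floor_iff, one_le_div hα0]
    exact hαδ
  rw [← hN] at h2 hK₁
  set κ := (3 : ℝ)⁻¹ ^ n * ∏ j, (1 - 5 * β j ^ N) - 8 ^ n * (1 + 2 ^ (2 * n + 1)) * δ with hκ
  have hκ0 : 0 < κ := by rw [hκ]; linarith
  have hκ1 : κ ≤ 1 := by
    have e1 : (3 : ℝ)⁻¹ ^ n ≤ 1 := pow_le_one₀ (by norm_num) (by norm_num)
    have e0 : ∀ j, 0 ≤ 1 - 5 * β j ^ N := by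
      intro j
      have := pow_le_of_le_one (hβ0 j).le (hβ1 j).le (n := N) (by omega)
      linarith [(hβ j).2]
    have e2 : ∏ j, (1 - 5 * β j ^ N) ≤ 1 := by
      refine Finset.prod_le_one (fun j _ => e0 j) (fun j _ => ?_)
      have := pow_pos (hβ0 j) N
      linarith
    have e3 : 0 ≤ ∏ j, (1 - 5 * β j ^ N) := Finset.prod_nonneg fun j _ => e0 j
    have e4 : (3 : ℝ)⁻¹ ^ n * ∏ j, (1 - 5 * β j ^ N) ≤ 1 := mul_le_one₀ e1 e3 e2
    have e5 : 0 ≤ 8 ^ n * (1 + 2 ^ (2 * n + 1)) * δ := by positivity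
    rw [hκ]
    linarith
  obtain ⟨θ, hθ⟩ : ∃ θ, θ = δ ^ (1 / c) := ⟨_, rfl⟩
  have hθ0 : 0 < θ := by rw [hθ]; exact Real.rpow_pos_of_pos hδ0 _
  have hθc : θ ^ c = δ := by
    rw [hθ, ← Real.rpow_mul hδ0.le, one_div, inv_mul_cancel₀ hc0.ne', Real.rpow_one]
  have hθδ : θ ≤ δ := by
    calc θ = δ ^ (1 / c) := hθ
      _ ≤ δ ^ (1 : ℝ) := by
        refine Real.rpow_le_rpow_of_exponent_ge hδ0 hδ1.le ?_
        rw [le_div_iff₀ hc0]; linarith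
      _ = δ := Real.rpow_one δ
  obtain ⟨σ, hleg, hwin⟩ := PG.merge β (fun j => (hβ j).1) c ⟨hc0, hc1⟩ ρ₂ I αf hαf S hS α
    ⟨hα0, hα1⟩ hαsum
  let T : ℕ → (ℕ → Fin n → ℝ) → Set (ℝ × (Fin n → ℝ)) :=
    fun t b => σ ρ₂ t (fun i : Fin (t + 1) => b (i : ℕ))
  have hT : ∀ t b b', (∀ i ≤ t, b i = b' i) → T t b = T t b' := by
    intro t b b' h
    show σ ρ₂ t _ = σ ρ₂ t _
    congr 1
    funext i
    exact h i (by omega)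
  have hlegT : ∀ t b, PG.Nst β ρ₂ t b →
      ∑' p : T t b, ENNReal.ofReal (((∏ j, β j) ^ p.1.1) ^ c) ≤
      ENNReal.ofReal ((α * (∏ j, β j) ^ ((t : ℕ) + 1 : ℝ)) ^ c) := by
    intro t b hb
    have h := (hleg ρ₂ t (fun i : Fin (t + 1) => b (i : ℕ)) le_rfl le_rfl
      (fun i => by simpa using hb i i.2)).2.2
    rw [if_pos hc0] at h
    have hc' : ∀ q : ℝ, ∏ j, β j ^ q = (∏ j, β j) ^ q := fun q =>
      Real.finsetProd_rpow _ _ (fun j _ => (hβ0 j).le) q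
    simp only [hc'] at h
    exact h
  obtain ⟨R, hR⟩ : ∃ R, R = ⌈κ / (∏ j, β j) ^ N⌉₊ := ⟨_, rfl⟩
  have hR1 : 1 ≤ R := by
    rw [hR, Nat.one_le_ceil_iff]
    positivity
  have hblock : ∀ t0 b, ∃ e : Fin R → ℕ → Fin n → ℝ, PG.Good β ρ₂ c θ T t0 b →
      ((∀ i, ∀ t ≤ t0, e i t = b t) ∧
      (∀ i, PG.Good β ρ₂ c θ T (t0 + N) (e i)) ∧
      (∀ i i', i ≠ i' →
        Disjoint (gameBox β (((t0 + N : ℕ) : ℝ) + 1) ρ₂ (e i (t0 + N)))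
          (gameBox β (((t0 + N : ℕ) : ℝ) + 1) ρ₂ (e i' (t0 + N))))) := by
    intro t0 b
    by_cases hg : PG.Good β ρ₂ c θ T t0 b
    · obtain ⟨e, he⟩ := PG.block hn β hβ ρ₂ hρ₂ c α δ θ N hc0 hc1 hα0 hα1 hδ0 hδ1 hθ0 hθδ hθc
        hN hN1 h1 T hT hlegT t0 b hg R hR
      exact ⟨e, fun _ => he⟩
    · exact ⟨fun _ => b, fun h => absurd h hg⟩
  obtain ⟨code, z, hcS, hcz, hz, hd, hz0⟩ := PG.tree β hβ0 hP1 ρ₂ c θ N R hN1 hc0 hρ₂ hθ0 T hT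
    hblock (⋂ i, S i) (fun b hb x hx hx' => hwin ρ₂ b le_rfl le_rfl hb x hx hx') y
  have hA : ∀ ω, code ω ∈ (⋂ i, S i) ∩ gameBox β 1 ρ₂ y := by
    intro ω
    refine ⟨hcS ω, ?_⟩
    have := hcz 0 ω
    rw [hz0] at this
    simpa using this
  refine ⟨⟨_, hA fun _ => ⟨0, hR1⟩⟩, ?_⟩
  obtain ⟨⟨j0, hj0⟩, hmax⟩ := hβmax
  have hm0 : 0 < βmax := hj0 ▸ hβ0 j0
  have hm1 : βmax < 1 := hj0 ▸ hβ1 j0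
  have hmain := PG.mass β hβ0 βmax (fun j => hmax ⟨j, rfl⟩) hm0 hm1 ρ₂ hρ₂ N R hN1 hR1 κ hκ0 hκ1
    (by rw [hR]; exact Nat.le_ceil _) code z hcz hz hd _ hA
  refine le_trans (ENNReal.ofReal_le_ofReal ?_) hmain
  have hlog : 0 < |Real.log βmax| := abs_pos.2 (Real.log_neg hm0 hm1).ne
  have hNpos : (1 : ℝ) ≤ N := by exact_mod_cast hN1
  have hNN : δ / α ≤ 2 * N := by
    have := Nat.lt_floor_add_one (δ / α)
    rw [← hN] at this
    linarith
  have hinv : 1 / (N : ℝ) ≤ 2 * δ⁻¹ * α := by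
    rw [div_le_iff₀ hα0] at hNN
    rw [div_le_iff₀ (by linarith)]
    calc (1 : ℝ) = δ⁻¹ * δ := (inv_mul_cancel₀ hδ0.ne').symm
      _ ≤ δ⁻¹ * (2 * N * α) := by gcongr
      _ = _ := by ring
  have : |Real.log κ| / (N * |Real.log βmax|) ≤ K₁ * α / |Real.log βmax| := by
    rw [← div_div]
    gcongr
    rw [hK₁]
    calc |Real.log κ| / N = |Real.log κ| * (1 / N) := by ring
      _ ≤ |Real.log κ| * (2 * δ⁻¹ * α) := by gcongr
      _ = _ := by ring
  linarith
end
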